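/- arXiv:2408.03051 — 4 statements merged into one kernel-verified Lean document; each statement's English description precedes it below -/
import Mathlib

section
/- Let $\alpha_1,\alpha_2>0$ and $H\in(0,2)$ with $H\neq 1$. Then for every $N\in\mathbb{N}$, as $s\to+\infty$, $r_{12}(s)=\frac{\nu_1\nu_2(\rho-\eta)}{2(\alpha_1+\alpha_2)}\sum_{n=0}^{N}\Big(\frac{(-1)^n}{\alpha_2^{\,n+1}}+\frac{1}{\alpha_1^{\,n+1}}\Big)\Big(\prod_{k=0}^{n+1}(H-k)\Big)s^{H-2-n}+O\big(s^{H-N-3}\big)$. -/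
open MeasureTheory Filter Asymptotics Topology Real

noncomputable def GG (α β v : ℝ) : ℝ := ∫ u in Set.Iic (0:ℝ), Real.exp (α * u) * (v - u) ^ β

lemma gg_bd {v u β : ℝ} (hv : 0 < v) (hu : u ≤ 0) (hβ : β ≤ 0) : (v - u) ^ β ≤ v ^ β :=
  Real.rpow_le_rpow_of_nonpos hv (by linarith) hβ

lemma gg_meas (α β v : ℝ) :
    AEStronglyMeasurable (fun u : ℝ => Real.exp (α * u) * (v - u) ^ β)
      (volume.restrict (Set.Iic (0:ℝ))) := by
  apply Measurable.aestronglyMeasurable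
  fun_prop

lemma exp_int {α : ℝ} (hα : 0 < α) : IntegrableOn (fun u : ℝ => Real.exp (α * u)) (Set.Iic 0) :=
  integrableOn_exp_mul_Iic hα 0

lemma gg_int {α β v : ℝ} (hα : 0 < α) (hβ : β ≤ 0) (hv : 0 < v) :
    IntegrableOn (fun u : ℝ => Real.exp (α * u) * (v - u) ^ β) (Set.Iic 0) := by
  refine Integrable.mono' ((exp_int hα).mul_const (v ^ β)) (gg_meas α β v) ?_
  refine (ae_restrict_iff' measurableSet_Iic).2 (Eventually.of_forall fun u hu => ?_)
  have hu : u ≤ 0 := hu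
  have h0 : 0 ≤ (v - u) ^ β := Real.rpow_nonneg (by linarith) _
  rw [Real.norm_of_nonneg (by positivity)]
  exact mul_le_mul_of_nonneg_left (gg_bd hv hu hβ) (Real.exp_pos _).le

lemma gg_nonneg {α β v : ℝ} (hv : 0 ≤ v) : 0 ≤ GG α β v := by
  refine setIntegral_nonneg measurableSet_Iic fun u hu => ?_
  have hu : u ≤ 0 := hu
  exact mul_nonneg (Real.exp_pos _).le (Real.rpow_nonneg (by linarith) _)

lemma gg_le {α β v : ℝ} (hα : 0 < α) (hβ : β ≤ 0) (hv : 0 < v) :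
    GG α β v ≤ v ^ β / α := by
  have h1 : GG α β v ≤ ∫ u in Set.Iic (0:ℝ), Real.exp (α * u) * v ^ β := by
    refine setIntegral_mono_on (gg_int hα hβ hv) ((exp_int hα).mul_const _) measurableSet_Iic ?_
    intro u hu
    exact mul_le_mul_of_nonneg_left (gg_bd hv hu hβ) (Real.exp_pos _).le
  have h2 : ∫ u in Set.Iic (0:ℝ), Real.exp (α * u) * v ^ β = v ^ β / α := by
    rw [integral_mul_const, integral_exp_mul_Iic hα]
    simp; ring
  linarith

lemma gg_rec {α β v : ℝ} (hα : 0 < α) (hβ : β ≤ 0) (hv : 0 < v) :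
    α * GG α β v - β * GG α (β - 1) v = v ^ β := by
  have hi1 := gg_int (β := β) hα hβ hv
  have hi2 := gg_int (β := β - 1) hα (by linarith) hv
  have hd : ∀ u ∈ Set.Iic (0:ℝ), HasDerivAt (fun u : ℝ => Real.exp (α * u) * (v - u) ^ β)
      (α * (Real.exp (α * u) * (v - u) ^ β) - β * (Real.exp (α * u) * (v - u) ^ (β - 1))) u := by
    intro u hu
    have hu : u ≤ 0 := hu
    have e1 : HasDerivAt (fun u : ℝ => Real.exp (α * u)) (Real.exp (α * u) * (α * 1)) u :=
      ((hasDerivAt_id' u).const_mul α).exp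
    have e2 : HasDerivAt (fun u : ℝ => (v - u) ^ β) ((-1) * β * (v - u) ^ (β - 1)) u :=
      ((hasDerivAt_id' u).const_sub v).rpow_const (Or.inl (show v - u ≠ 0 from (by linarith : 0 < v - u).ne'))
    refine (e1.mul e2).congr_deriv ?_
    ring
  have ht : Tendsto (fun u : ℝ => Real.exp (α * u) * (v - u) ^ β) atBot (𝓝 0) := by
    have t1 : Tendsto (fun u : ℝ => Real.exp (α * u) * v ^ β) atBot (𝓝 0) := by
      have : Tendsto (fun u : ℝ => Real.exp (α * u)) atBot (𝓝 0) :=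
        Real.tendsto_exp_atBot.comp (tendsto_id.const_mul_atBot hα)
      simpa using this.mul_const (v ^ β)
    refine squeeze_zero' ?_ ?_ t1
    · filter_upwards [eventually_le_atBot (0:ℝ)] with u hu
      exact mul_nonneg (Real.exp_pos _).le (Real.rpow_nonneg (by linarith) _)
    · filter_upwards [eventually_le_atBot (0:ℝ)] with u hu
      exact mul_le_mul_of_nonneg_left (gg_bd hv hu hβ) (Real.exp_pos _).le
  have key := integral_Iic_of_hasDerivAt_of_tendsto' hd
    ((hi1.const_mul α).sub (hi2.const_mul β)) ht
  rw [integral_sub (hi1.const_mul α) (hi2.const_mul β), integral_const_mul,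
    integral_const_mul] at key
  simpa [GG] using key

lemma gg_cont {α β v : ℝ} (hα : 0 < α) (hβ : β ≤ 0) (hv : 0 < v) :
    ContinuousAt (GG α β) v := by
  refine continuousAt_of_dominated (bound := fun u => Real.exp (α * u) * (v / 2) ^ β) ?_ ?_
    ((exp_int hα).mul_const _) ?_
  · exact Eventually.of_forall fun x => gg_meas α β x
  · filter_upwards [lt_mem_nhds (show v / 2 < v by linarith)] with x hx
    refine (ae_restrict_iff' measurableSet_Iic).2 (Eventually.of_forall fun u hu => ?_)
    have hu : u ≤ 0 := hu
    have h0 : 0 ≤ (x - u) ^ β := Real.rpow_nonneg (by linarith) _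
    rw [Real.norm_of_nonneg (by positivity)]
    refine mul_le_mul_of_nonneg_left ?_ (Real.exp_pos _).le
    exact Real.rpow_le_rpow_of_nonpos (by linarith) (by linarith) hβ
  · refine (ae_restrict_iff' measurableSet_Iic).2 (Eventually.of_forall fun u hu => ?_)
    have hu : u ≤ 0 := hu
    refine continuousAt_const.mul ?_
    exact (continuousAt_id.sub continuousAt_const).rpow_const (Or.inl (show v - u ≠ 0 from (by linarith : 0 < v - u).ne'))

lemma neg_rpow_int {α a : ℝ} (hα : 0 < α) (ha : 0 < a) :
    IntegrableOn (fun u : ℝ => Real.exp (α * u) * (-u) ^ (a - 1)) (Set.Iic 0) := by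
  have h : IntegrableOn (fun x : ℝ => x ^ (a - 1) * Real.exp (-α * x)) (Set.Ioi 0) := by
    have := integrableOn_rpow_mul_exp_neg_mul_rpow (p := 1) (s := a - 1) (by linarith) one_pos hα
    simpa using this
  rw [integrableOn_Iic_iff_integrableOn_Iio]
  have := h.comp_neg
  rw [Set.neg_Ioi, neg_zero] at this
  refine this.congr_fun ?_ measurableSet_Iio
  intro x hx
  simp; ring

lemma gg_small {α H : ℝ} (hα : 0 < α) (hH : 0 < H) (hH2 : H < 2) :
    ∃ C, ∀ v, 0 < v → GG α (H - 2) v ≤ C * v ^ (H / 2 - 1) := by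
  refine ⟨∫ u in Set.Iic (0:ℝ), Real.exp (α * u) * (-u) ^ (H / 2 - 1), fun v hv => ?_⟩
  have hi := neg_rpow_int hα (show 0 < H / 2 by linarith)
  rw [← integral_mul_const, GG, integral_Iic_eq_integral_Iio, integral_Iic_eq_integral_Iio]
  refine setIntegral_mono_on ((gg_int hα (by linarith) hv).mono_set Set.Iio_subset_Iic_self)
    ((hi.mono_set Set.Iio_subset_Iic_self).mul_const _) measurableSet_Iio ?_
  intro u hu
  have hu : u < 0 := hu
  rw [mul_assoc]
  refine mul_le_mul_of_nonneg_left ?_ (Real.exp_pos _).le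
  rw [show H - 2 = (H / 2 - 1) + (H / 2 - 1) by ring, Real.rpow_add (by linarith)]
  refine mul_le_mul ?_ ?_ (Real.rpow_nonneg (by linarith) _) (Real.rpow_nonneg (by linarith) _)
  · exact Real.rpow_le_rpow_of_nonpos (by linarith) (by linarith) (by linarith)
  · exact Real.rpow_le_rpow_of_nonpos (by linarith) (by linarith) (by linarith)

lemma gg_deriv {α α2 H s : ℝ} (hα : 0 < α) (hH : 0 < H) (hH2 : H < 2) (hs : 0 < s) :
    HasDerivAt (fun s : ℝ => ∫ v in (0:ℝ)..s, Real.exp (α2 * v) * GG α (H - 2) v)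
      (Real.exp (α2 * s) * GG α (H - 2) s) s := by
  have hc : ∀ v, 0 < v → ContinuousAt (fun v => Real.exp (α2 * v) * GG α (H - 2) v) v := by
    intro v hv
    exact ContinuousAt.mul (by fun_prop) (gg_cont hα (by linarith) hv)
  have hco : ContinuousOn (fun v => Real.exp (α2 * v) * GG α (H - 2) v) (Set.Ioi 0) :=
    fun v hv => (hc v hv).continuousWithinAt
  refine intervalIntegral.integral_hasDerivAt_right ?_ ?_ (hc s hs)
  · obtain ⟨C, hC⟩ := gg_small hα hH hH2
    have hb : IntervalIntegrable (fun v : ℝ => Real.exp (α2 * v) * (C * v ^ (H / 2 - 1)))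
        volume 0 s := by
      refine IntervalIntegrable.continuousOn_mul ?_ (by fun_prop)
      exact (intervalIntegral.intervalIntegrable_rpow' (by linarith)).const_mul C
    rw [intervalIntegrable_iff_integrableOn_Ioc_of_le hs.le] at hb ⊢
    refine Integrable.mono' hb
      ((hco.mono Set.Ioc_subset_Ioi_self).aestronglyMeasurable measurableSet_Ioc) ?_
    refine (ae_restrict_iff' measurableSet_Ioc).2 (Eventually.of_forall fun v hv => ?_)
    have h0 := gg_nonneg (α := α) (β := H - 2) hv.1.le
    rw [Real.norm_of_nonneg (by positivity)]
    exact mul_le_mul_of_nonneg_left (hC v hv.1) (Real.exp_pos _).le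
  · exact hco.stronglyMeasurableAtFilter isOpen_Ioi s hs

lemma ode_bound {K E : ℝ → ℝ} {a γ C : ℝ} (ha : 0 < a)
    (hK : ∀ s, 0 < s → HasDerivAt K (-a * K s + E s) s)
    (hE : ∀ s, 0 < s → |E s| ≤ C * s ^ γ) : K =O[atTop] fun s : ℝ => s ^ γ := by
  set s0 : ℝ := 2 * |γ| / a + 1 with hs0
  have hs0p : 0 < s0 := by positivity
  have hC : 0 ≤ C := by
    have := hE 1 one_pos
    simp at this
    exact (abs_nonneg _).trans this
  set M : ℝ := 2 * C / a + |K s0| / s0 ^ γ with hM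
  have hMC : 2 * C / a ≤ M := by
    have : 0 ≤ |K s0| / s0 ^ γ := by positivity
    linarith
  have hM0 : 0 ≤ M := le_trans (by positivity) hMC
  refine IsBigO.of_bound M ?_
  filter_upwards [eventually_ge_atTop s0] with T hT
  have hd : ∀ s, 0 < s → HasDerivAt (fun s => Real.exp (a * s) * K s)
      (Real.exp (a * s) * E s) s := by
    intro s hs
    have e1 : HasDerivAt (fun u : ℝ => Real.exp (a * u)) (Real.exp (a * s) * (a * 1)) s :=
      ((hasDerivAt_id' s).const_mul a).exp
    refine (e1.mul (hK s hs)).congr_deriv ?_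
    ring
  have hB : ∀ s, 0 < s → HasDerivAt (fun s => M * (Real.exp (a * s) * s ^ γ))
      (M * (Real.exp (a * s) * (a * 1) * s ^ γ + Real.exp (a * s) * (γ * s ^ (γ - 1)))) s := by
    intro s hs
    have e1 : HasDerivAt (fun u : ℝ => Real.exp (a * u)) (Real.exp (a * s) * (a * 1)) s :=
      ((hasDerivAt_id' s).const_mul a).exp
    exact (e1.mul (Real.hasDerivAt_rpow_const (Or.inl hs.ne'))).const_mul M
  have key := image_norm_le_of_norm_deriv_right_le_deriv_boundary'
    (f := fun s => Real.exp (a * s) * K s) (f' := fun s => Real.exp (a * s) * E s)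
    (a := s0) (b := T) (B := fun s => M * (Real.exp (a * s) * s ^ γ))
    (B' := fun s => M * (Real.exp (a * s) * (a * 1) * s ^ γ
      + Real.exp (a * s) * (γ * s ^ (γ - 1))))
    (fun s hs => (hd s (hs0p.trans_le hs.1)).continuousAt.continuousWithinAt)
    (fun s hs => (hd s (hs0p.trans_le hs.1)).hasDerivWithinAt) ?_
    (fun s hs => (hB s (hs0p.trans_le hs.1)).continuousAt.continuousWithinAt)
    (fun s hs => (hB s (hs0p.trans_le hs.1)).hasDerivWithinAt) ?_ (Set.right_mem_Icc.2 hT)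
  · have hTp : 0 < T := hs0p.trans_le hT
    have hTg : 0 < T ^ γ := Real.rpow_pos_of_pos hTp _
    simp only [norm_mul, Real.norm_eq_abs, Real.abs_exp] at key ⊢
    rw [abs_of_pos hTg]
    have : Real.exp (a * T) * |K T| ≤ Real.exp (a * T) * (M * T ^ γ) := by linarith
    exact le_of_mul_le_mul_left this (Real.exp_pos _)
  · simp only [norm_mul, Real.norm_eq_abs, Real.abs_exp]
    have hg : 0 < s0 ^ γ := Real.rpow_pos_of_pos hs0p _
    have : |K s0| ≤ M * s0 ^ γ := by
      rw [hM, add_mul, div_mul_cancel₀ _ hg.ne']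
      have : 0 ≤ 2 * C / a * s0 ^ γ := by positivity
      linarith
    have := mul_le_mul_of_nonneg_left this (Real.exp_pos (a * s0)).le
    linarith
  · intro s hs
    have hsp : 0 < s := hs0p.trans_le hs.1
    have hg : 0 < s ^ γ := Real.rpow_pos_of_pos hsp _
    simp only [norm_mul, Real.norm_eq_abs, Real.abs_exp]
    rw [Real.rpow_sub_one hsp.ne']
    have h1 : -(a / 2) ≤ γ / s := by
      rw [le_div_iff₀ hsp]
      have h2 : 2 * |γ| / a ≤ s := by linarith [hs.1]
      rw [div_le_iff₀ ha] at h2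
      have := neg_abs_le γ
      nlinarith
    have h3 : C ≤ M * (a + γ / s) := by
      have : M * (a / 2) ≤ M * (a + γ / s) := mul_le_mul_of_nonneg_left (by linarith) hM0
      rw [div_le_iff₀ ha] at hMC
      linarith
    calc Real.exp (a * s) * |E s| ≤ Real.exp (a * s) * (C * s ^ γ) :=
          mul_le_mul_of_nonneg_left (hE s hsp) (Real.exp_pos _).le
      _ ≤ Real.exp (a * s) * (M * (a + γ / s) * s ^ γ) := by gcongr
      _ = _ := by ring

lemma gg_expand {α H v : ℝ} (hα : 0 < α) (hH2 : H < 2) (hv : 0 < v) (N : ℕ) :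
    H * (H - 1) * GG α (H - 2) v =
      ∑ n ∈ Finset.range N, 1 / α ^ (n + 1) *
        (∏ k ∈ Finset.range (n + 2), (H - (k : ℝ))) * v ^ (H - 2 - (n : ℝ))
      + (∏ k ∈ Finset.range (N + 2), (H - (k : ℝ))) / α ^ N * GG α (H - 2 - (N : ℝ)) v := by
  induction N with
  | zero => simp [Finset.prod_range_succ]
  | succ N ih =>
    have hN : (0:ℝ) ≤ N := Nat.cast_nonneg N
    have hr := gg_rec (β := H - 2 - (N : ℝ)) hα (by linarith) hv
    rw [ih, Finset.sum_range_succ, Finset.prod_range_succ _ (N + 2), ← hr]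
    push_cast
    rw [show H - 2 - ((N : ℝ) + 1) = H - 2 - (N : ℝ) - 1 by ring]
    field_simp
    ring

lemma sum_ode {α1 α2 H s : ℝ} (hα1 : 0 < α1) (hα2 : 0 < α2) (hs : 0 < s) (N : ℕ) :
    HasDerivAt (fun s : ℝ => ∑ n ∈ Finset.range (N + 1),
          ((-1 : ℝ) ^ n / α2 ^ (n + 1) + 1 / α1 ^ (n + 1)) *
            (∏ k ∈ Finset.range (n + 2), (H - (k : ℝ))) * s ^ (H - 2 - (n : ℝ)))
      (-α2 * ∑ n ∈ Finset.range (N + 1),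
          ((-1 : ℝ) ^ n / α2 ^ (n + 1) + 1 / α1 ^ (n + 1)) *
            (∏ k ∈ Finset.range (n + 2), (H - (k : ℝ))) * s ^ (H - 2 - (n : ℝ))
        + ((α1 + α2) * ∑ n ∈ Finset.range (N + 1), 1 / α1 ^ (n + 1) *
        (∏ k ∈ Finset.range (n + 2), (H - (k : ℝ))) * s ^ (H - 2 - (n : ℝ))
        + ((-1 : ℝ) ^ N / α2 ^ (N + 1) + 1 / α1 ^ (N + 1)) *
          (∏ k ∈ Finset.range (N + 3), (H - (k : ℝ))) * s ^ (H - (N : ℝ) - 3))) s := by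
  induction N with
  | zero =>
    simp only [zero_add, Finset.sum_range_one]
    have := (Real.hasDerivAt_rpow_const (p := H - 2 - ((0:ℕ) : ℝ)) (Or.inl hs.ne')).const_mul
      (((-1 : ℝ) ^ 0 / α2 ^ (0 + 1) + 1 / α1 ^ (0 + 1)) *
            (∏ k ∈ Finset.range (0 + 2), (H - (k : ℝ))))
    refine this.congr_deriv ?_
    simp only [Finset.prod_range_succ, Finset.prod_range_zero]
    push_cast
    rw [show H - 2 - 0 - 1 = H - 0 - 3 by ring]
    field_simp
    ring
  | succ N ih =>
    have h2 := (Real.hasDerivAt_rpow_const (p := H - 2 - ((N + 1 : ℕ) : ℝ))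
      (Or.inl hs.ne')).const_mul
      (((-1 : ℝ) ^ (N + 1) / α2 ^ (N + 1 + 1) + 1 / α1 ^ (N + 1 + 1)) *
            (∏ k ∈ Finset.range (N + 1 + 2), (H - (k : ℝ))))
    have h3 := ih.add h2
    simp only [Finset.sum_range_succ _ (N + 1)]
    refine h3.congr_deriv ?_
    rw [Finset.prod_range_succ _ (N + 1 + 2)]
    push_cast
    rw [show H - 2 - ((N : ℝ) + 1) - 1 = H - ((N : ℝ) + 1) - 3 by ring,
      show H - 2 - ((N : ℝ) + 1) = H - (N : ℝ) - 3 by ring]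
    field_simp
    ring

/-- Long-time asymptotic expansion of the lagged cross-covariance `r₁₂` of the
bivariate fractional Ornstein–Uhlenbeck process, for `H = H₁ + H₂ ≠ 1`. -/
theorem stmt0
    (α1 α2 ν1 ν2 H ρ η : ℝ)
    (hα1 : 0 < α1) (hα2 : 0 < α2) (hν1 : 0 < ν1) (hν2 : 0 < ν2)
    (hH : H ∈ Set.Ioo (0:ℝ) 2) (hH1 : H ≠ 1)
    (C0 : ℝ)
    (hC0 : C0 = Real.Gamma (H + 1) * ν1 * ν2 / (2 * (α1 + α2)) *
      ((α1 ^ (1 - H) + α2 ^ (1 - H)) * ρ + (α2 ^ (1 - H) - α1 ^ (1 - H)) * η))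
    (I12 : ℝ → ℝ)
    (hI12 : ∀ s, I12 s =
      ∫ v in (0:ℝ)..s, Real.exp (α2 * v) *
        ∫ u in Set.Iic (0:ℝ), Real.exp (α1 * u) * (v - u) ^ (H - 2))
    (r12 : ℝ → ℝ)
    (hr12 : ∀ s, r12 s = Real.exp (-α2 * s) * C0 +
      ν1 * ν2 * Real.exp (-α2 * s) * (H * (H - 1)) * ((ρ - η) / 2) * I12 s)
    (N : ℕ) :
    (fun s : ℝ => r12 s -
      ν1 * ν2 * (ρ - η) / (2 * (α1 + α2)) *
        ∑ n ∈ Finset.range (N + 1),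
          ((-1 : ℝ) ^ n / α2 ^ (n + 1) + 1 / α1 ^ (n + 1)) *
            (∏ k ∈ Finset.range (n + 2), (H - (k : ℝ))) * s ^ (H - 2 - (n : ℝ)))
      =O[atTop] fun s : ℝ => s ^ (H - (N : ℝ) - 3) := by
  obtain ⟨hH0, hH2⟩ := hH
  have hN : (0:ℝ) ≤ N := Nat.cast_nonneg N
  have hI : I12 = fun s => ∫ v in (0:ℝ)..s, Real.exp (α2 * v) * GG α1 (H - 2) v := by
    funext s
    exact hI12 s
  set P : ℝ := ∏ k ∈ Finset.range (N + 3), (H - (k : ℝ)) with hP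
  set c : ℝ := ν1 * ν2 * (ρ - η) / 2 with hc
  set A : ℝ := ((-1 : ℝ) ^ N / α2 ^ (N + 1) + 1 / α1 ^ (N + 1)) with hA
  refine ode_bound (a := α2)
    (E := fun s => c * (P / α1 ^ (N + 1) * GG α1 (H - (N : ℝ) - 3) s
      - A * P / (α1 + α2) * s ^ (H - (N : ℝ) - 3)))
    (C := |c| * (|P / α1 ^ (N + 1)| / α1 + |A * P / (α1 + α2)|)) hα2 ?_ ?_
  · intro s hs
    have hr : r12 = fun s => Real.exp (-α2 * s) * (C0 + c * (H * (H - 1)) *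
        ∫ v in (0:ℝ)..s, Real.exp (α2 * v) * GG α1 (H - 2) v) := by
      funext s
      rw [hr12, hI]
      ring
    have e1 : HasDerivAt (fun u : ℝ => Real.exp (-α2 * u)) (Real.exp (-α2 * s) * (-α2 * 1)) s :=
      ((hasDerivAt_id' s).const_mul (-α2)).exp
    have e2 := e1.mul (((gg_deriv (α2 := α2) hα1 hH0 hH2 hs).const_mul
      (c * (H * (H - 1)))).const_add C0)
    have e3 := (sum_ode (H := H) hα1 hα2 hs N).const_mul
      (ν1 * ν2 * (ρ - η) / (2 * (α1 + α2)))
    have e4 := e2.sub e3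
    rw [hr]
    refine e4.congr_deriv ?_
    have hx := gg_expand (H := H) hα1 hH2 hs (N + 1)
    have hee : Real.exp (-α2 * s) * Real.exp (α2 * s) = 1 := by
      rw [← Real.exp_add]; simp
    rw [show H - 2 - ((N + 1 : ℕ) : ℝ) = H - (N : ℝ) - 3 by push_cast; ring] at hx
    rw [show N + 1 + 2 = N + 3 by ring, ← hP] at hx
    have hx2 : Real.exp (-α2 * s) * (c * (H * (H - 1)) *
        (Real.exp (α2 * s) * GG α1 (H - 2) s)) = c * (H * (H - 1) * GG α1 (H - 2) s) := by
      linear_combination (c * (H * (H - 1)) * GG α1 (H - 2) s) * hee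
    rw [hx2, hx]
    generalize (∑ n ∈ Finset.range (N + 1), 1 / α1 ^ (n + 1) *
        (∏ k ∈ Finset.range (n + 2), (H - (k : ℝ))) * s ^ (H - 2 - (n : ℝ))) = S1
    generalize (∑ n ∈ Finset.range (N + 1),
          ((-1 : ℝ) ^ n / α2 ^ (n + 1) + 1 / α1 ^ (n + 1)) *
            (∏ k ∈ Finset.range (n + 2), (H - (k : ℝ))) * s ^ (H - 2 - (n : ℝ))) = S2
    rw [← hA, ← hP, hc]
    clear_value A P
    have : α1 + α2 ≠ 0 := by positivity
    field_simp
    ring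
  · intro s hs
    have hg := gg_nonneg (α := α1) (β := H - (N : ℝ) - 3) hs.le
    have hl := gg_le (α := α1) (β := H - (N : ℝ) - 3) hα1 (by linarith) hs
    have hp : 0 < s ^ (H - (N : ℝ) - 3) := Real.rpow_pos_of_pos hs _
    rw [abs_mul, mul_assoc]
    refine mul_le_mul_of_nonneg_left ?_ (abs_nonneg _)
    refine (abs_sub _ _).trans ?_
    rw [abs_mul, abs_mul _ (s ^ _), abs_of_nonneg hg, abs_of_pos hp]
    have := mul_le_mul_of_nonneg_left hl (abs_nonneg (P / α1 ^ (N + 1)))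
    clear_value A P
    exact (add_le_add this le_rfl).trans (le_of_eq (by ring))
end

section
/- Let $H_1,H_2\in(0,1)$ with $H:=H_1+H_2<3/2$. Let $\gamma_{11},\gamma_{22},\gamma_{12},\gamma_{21}:\mathbb{Z}\to\mathbb{R}$ satisfy: (i) $|\gamma_{ij}(k)|\le\gamma_{ij}(0)$ for all $k\in\mathbb{Z}$ and all $i,j\in\{1,2\}$; (ii) there exist constants $\ell_{ij}>0$ such that $\lim_{|k|\to\infty}|\gamma_{ii}(k)|/|k|^{2H_i-2}=\ell_{ii}$ for $i=1,2$ and $\lim_{|k|\to\infty}|\gamma_{ij}(k)|/|k|^{H-2}=\ell_{ij}$ for $i\neq j$. Let $F(k_1,k_2,k_3,k_4)$ be any one of the four functions $\gamma_{11}(k_1-k_2)\gamma_{22}(k_2-k_3)\gamma_{11}(k_3-k_4)\gamma_{22}(k_4-k_1)$, $\gamma_{12}(k_1-k_2)\gamma_{12}(k_2-k_3)\gamma_{12}(k_3-k_4)\gamma_{12}(k_4-k_1)$, $\gamma_{12}(k_1-k_2)\gamma_{12}(k_2-k_3)\gamma_{11}(k_3-k_4)\gamma_{22}(k_4-k_1)$,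 or $\gamma_{12}(k_1-k_2)\gamma_{11}(k_2-k_3)\gamma_{21}(k_3-k_4)\gamma_{22}(k_4-k_1)$. Then $\frac{1}{n^{2}}\sum_{k_1,k_2,k_3,k_4=0}^{n-1}F(k_1,k_2,k_3,k_4)\longrightarrow 0$ as $n\to\infty$. -/
open MeasureTheory Filter Asymptotics Topology Real

/-- polynomial weight -/
noncomputable def wt (s : ℝ) (k : ℤ) : ℝ := (1 + |(k : ℝ)|) ^ (-s)

/-- decay at rate `s` -/
def Dec (s : ℝ) (f : ℤ → ℝ) : Prop := ∃ K : ℝ, ∀ k, |f k| ≤ K * wt s k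

/-- cyclic sum -/
def Q (n : ℕ) (f1 f2 f3 f4 : ℤ → ℝ) : ℝ :=
  ∑ k1 ∈ Finset.range n, ∑ k2 ∈ Finset.range n,
    ∑ k3 ∈ Finset.range n, ∑ k4 ∈ Finset.range n,
      f1 ((k1 : ℤ) - k2) * f2 ((k2 : ℤ) - k3) * f3 ((k3 : ℤ) - k4) * f4 ((k4 : ℤ) - k1)

lemma wt_pos (s : ℝ) (k : ℤ) : 0 < wt s k := by unfold wt; positivity

lemma Dec.nonneg {s : ℝ} {f : ℤ → ℝ} (h : Dec s f) :
    ∃ K : ℝ, 0 ≤ K ∧ ∀ k, |f k| ≤ K * wt s k := by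
  obtain ⟨K, hK⟩ := h
  refine ⟨K, ?_, hK⟩
  have := (abs_nonneg _).trans (hK 0)
  exact nonneg_of_mul_nonneg_left this (wt_pos s 0)

lemma Dec.mono {s t : ℝ} {f : ℤ → ℝ} (h : Dec s f) (hst : t ≤ s) : Dec t f := by
  obtain ⟨K, hK0, hK⟩ := h.nonneg
  refine ⟨K, fun k => (hK k).trans ?_⟩
  apply mul_le_mul_of_nonneg_left _ hK0
  unfold wt
  apply Real.rpow_le_rpow_of_exponent_le
  · linarith [abs_nonneg (k : ℝ)]
  · linarith

lemma Dec.abs {s : ℝ} {f : ℤ → ℝ} (h : Dec s f) : Dec s (fun k => |f k|) := by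
  obtain ⟨K, hK⟩ := h
  exact ⟨K, fun k => by rw [abs_abs]; exact hK k⟩

lemma Dec.sq {s : ℝ} {f : ℤ → ℝ} (h : Dec s f) : Dec (2 * s) (fun k => f k ^ 2) := by
  obtain ⟨K, hK0, hK⟩ := h.nonneg
  refine ⟨K ^ 2, fun k => ?_⟩
  have e : wt (2 * s) k = wt s k ^ 2 := by
    unfold wt
    rw [← Real.rpow_natCast, ← Real.rpow_mul (by positivity)]
    congr 1; push_cast; ring
  rw [e, abs_pow, ← mul_pow]
  exact pow_le_pow_left₀ (abs_nonneg _) (hK k) 2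

lemma dec_of_lim {a ℓ : ℝ} {f : ℤ → ℝ} (hb : ∀ k, |f k| ≤ f 0) (ha : 0 < a)
    (hl : Tendsto (fun k : ℤ => |f k| / |(k : ℝ)| ^ (-a)) (cocompact ℤ) (𝓝 ℓ)) : Dec a f := by
  rw [cocompact_eq_cofinite] at hl
  have h1 : ∀ᶠ k in cofinite, |f k| / |(k : ℝ)| ^ (-a) < ℓ + 1 :=
    hl.eventually (gt_mem_nhds (by linarith))
  have hfin : {k : ℤ | ¬ |f k| / |(k : ℝ)| ^ (-a) < ℓ + 1}.Finite := h1
  obtain ⟨M, hM⟩ := (hfin.image (fun k => |f k| / wt a k)).bddAbove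
  refine ⟨max (max M (f 0)) ((ℓ + 1) * 2 ^ a), fun k => ?_⟩
  rw [← div_le_iff₀ (wt_pos a k)]
  by_cases hk : |f k| / |(k : ℝ)| ^ (-a) < ℓ + 1
  · rcases eq_or_ne k 0 with rfl | hk0
    · refine le_trans ?_ ((le_max_right _ _).trans (le_max_left _ _))
      simp [wt]
      have := hb 0
      simpa using this
    · refine le_trans ?_ (le_max_right _ _)
      have hk1 : (1 : ℝ) ≤ |(k : ℝ)| := by exact_mod_cast Int.one_le_abs hk0
      have hp : 0 < |(k : ℝ)| ^ (-a) := by positivity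
      have hw : |(k : ℝ)| ^ (-a) ≤ 2 ^ a * wt a k := by
        have : (2 * |(k : ℝ)|) ^ (-a) ≤ wt a k := by
          unfold wt
          apply Real.rpow_le_rpow_of_nonpos <;> linarith
        rw [Real.mul_rpow (by norm_num) (by positivity), Real.rpow_neg (by norm_num : (0:ℝ) ≤ 2)] at this
        have h2 : (0:ℝ) < 2 ^ a := by positivity
        rwa [inv_mul_le_iff₀ h2] at this
      have hl0 : 0 ≤ ℓ + 1 := le_trans (by positivity) hk.le
      rw [div_le_iff₀ (wt_pos a k)]
      rw [div_lt_iff₀ hp] at hk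
      calc |f k| ≤ (ℓ + 1) * |(k : ℝ)| ^ (-a) := hk.le
        _ ≤ (ℓ + 1) * (2 ^ a * wt a k) := mul_le_mul_of_nonneg_left hw hl0
        _ = _ := by ring
  · refine le_trans ?_ ((le_max_left _ _).trans (le_max_left _ _))
    exact hM ⟨k, hk, rfl⟩

lemma sum_pow_le {s : ℝ} (h0 : 0 ≤ s) (h1 : s < 1) (n : ℕ) :
    ∑ j ∈ Finset.range n, (1 + (j : ℝ)) ^ (-s) ≤ (n : ℝ) ^ (1 - s) / (1 - s) := by
  have hs : 0 < 1 - s := by linarith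
  induction n with
  | zero => simp; rw [Real.zero_rpow (by linarith)]; simp
  | succ n ih =>
    rw [Finset.sum_range_succ]
    have hx : (0:ℝ) < n + 1 := by positivity
    have key : (n : ℝ) ^ (1 - s) ≤ ((n:ℝ) + 1) ^ (1 - s) - (1 - s) * ((n:ℝ) + 1) ^ (-s) := by
      have e : (n : ℝ) = (n + 1) * (1 + (-(1 / ((n:ℝ) + 1)))) := by field_simp; ring
      have hle : 1 / ((n:ℝ) + 1) ≤ 1 := by
        rw [div_le_one hx]; linarith [(Nat.cast_nonneg n : (0:ℝ) ≤ n)]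
      have hb := rpow_one_add_le_one_add_mul_self (s := -(1 / ((n:ℝ) + 1))) (p := 1 - s)
        (by linarith) hs.le (by linarith)
      have e2 : ((n:ℝ) + 1) ^ (-s) = ((n:ℝ) + 1) ^ (1 - s) * (1 / ((n:ℝ) + 1)) := by
        rw [show -s = (1 - s) - 1 by ring, Real.rpow_sub_one hx.ne']; ring
      calc (n : ℝ) ^ (1 - s) = ((n:ℝ) + 1) ^ (1 - s) * (1 + (-(1 / ((n:ℝ) + 1)))) ^ (1 - s) := by
            rw [← Real.mul_rpow hx.le (by linarith), ← e]
        _ ≤ ((n:ℝ) + 1) ^ (1 - s) * (1 + (1 - s) * (-(1 / ((n:ℝ) + 1)))) :=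
            mul_le_mul_of_nonneg_left hb (by positivity)
        _ = _ := by rw [e2]; ring
    have : (n : ℝ) ^ (1 - s) / (1 - s) ≤ ((n:ℝ) + 1) ^ (1 - s) / (1 - s) - ((n:ℝ) + 1) ^ (-s) := by
      rw [div_le_iff₀ hs, sub_mul, div_mul_cancel₀ _ hs.ne']; linarith
    push_cast
    rw [add_comm (1:ℝ) n]
    linarith

lemma sum_abs_le {g : ℕ → ℝ} (hg : ∀ j, 0 ≤ g j) (n a : ℕ) (ha : a < n) :
    ∑ k ∈ Finset.range n, g ((a : ℤ) - k).natAbs ≤ 2 * ∑ j ∈ Finset.range n, g j := by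
  rw [← Finset.sum_filter_add_sum_filter_not (Finset.range n) (fun k => k ≤ a), two_mul]
  have aux : ∀ S : Finset ℕ, S ⊆ Finset.range n →
      Set.InjOn (fun k : ℕ => ((a : ℤ) - k).natAbs) S →
      ∑ k ∈ S, g ((a : ℤ) - k).natAbs ≤ ∑ j ∈ Finset.range n, g j := by
    intro S hS hinj
    rw [← Finset.sum_image (f := g) hinj]
    apply Finset.sum_le_sum_of_subset_of_nonneg
    · intro j hj
      obtain ⟨k, hk, rfl⟩ := Finset.mem_image.1 hj
      have := Finset.mem_range.1 (hS hk)
      simp only [Finset.mem_range]; omega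
    · intros; exact hg _
  apply add_le_add
  · apply aux _ (Finset.filter_subset _ _)
    intro x hx y hy hxy
    simp at hx hy hxy; omega
  · apply aux _ (Finset.filter_subset _ _)
    intro x hx y hy hxy
    simp at hx hy hxy; omega

lemma leaf {s : ℝ} (h0 : 0 ≤ s) (h1 : s < 1) {f : ℤ → ℝ} (hf : Dec s f) :
    ∃ M : ℝ, 0 ≤ M ∧ ∀ n a : ℕ, a < n →
      ∑ k ∈ Finset.range n, |f ((a : ℤ) - k)| ≤ M * (n : ℝ) ^ (1 - s) := by
  obtain ⟨K, hK0, hK⟩ := hf.nonneg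
  have hs : 0 < 1 - s := by linarith
  refine ⟨K * (2 / (1 - s)), by positivity, fun n a ha => ?_⟩
  have hw : ∀ k : ℤ, wt s k = (1 + (k.natAbs : ℝ)) ^ (-s) := by
    intro k; unfold wt; rw [Nat.cast_natAbs, Int.cast_abs]
  calc ∑ k ∈ Finset.range n, |f ((a : ℤ) - k)|
      ≤ ∑ k ∈ Finset.range n, K * (1 + ((((a : ℤ) - k).natAbs : ℕ) : ℝ)) ^ (-s) :=
        Finset.sum_le_sum fun k _ => by rw [← hw]; exact hK _
    _ = K * ∑ k ∈ Finset.range n, (1 + ((((a : ℤ) - k).natAbs : ℕ) : ℝ)) ^ (-s) := by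
        rw [Finset.mul_sum]
    _ ≤ K * (2 * ((n : ℝ) ^ (1 - s) / (1 - s))) := by
        apply mul_le_mul_of_nonneg_left _ hK0
        refine (sum_abs_le (g := fun j => (1 + (j : ℝ)) ^ (-s)) (fun j => by positivity) n a ha).trans ?_
        exact mul_le_mul_of_nonneg_left (sum_pow_le h0 h1 n) (by norm_num)
    _ = _ := by ring

lemma Q_rot (n : ℕ) (f1 f2 f3 f4 : ℤ → ℝ) : Q n f1 f2 f3 f4 = Q n f2 f3 f4 f1 := by
  unfold Q
  rw [Finset.sum_comm]
  refine Finset.sum_congr rfl fun k2 _ => ?_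
  rw [Finset.sum_comm]
  refine Finset.sum_congr rfl fun k3 _ => ?_
  rw [Finset.sum_comm]
  refine Finset.sum_congr rfl fun k4 _ => ?_
  refine Finset.sum_congr rfl fun k1 _ => ?_
  ring

lemma Q_abs_le (n : ℕ) (u v w : ℤ → ℝ) (a b c : ℝ) (ha : 0 ≤ a) (hb : 0 ≤ b) (hc : 0 ≤ c)
    (hu : ∀ i < n, ∑ k ∈ Finset.range n, |u ((i : ℤ) - k)| ≤ a)
    (hv : ∀ i < n, ∑ k ∈ Finset.range n, |v ((i : ℤ) - k)| ≤ b)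
    (hw : ∀ i < n, ∑ k ∈ Finset.range n, |w ((i : ℤ) - k)| ≤ c) :
    |Q n u v w (fun _ => 1)| ≤ n * (a * b * c) := by
  unfold Q
  have h3 : ∀ k1 k2 k3 : ℕ, k3 < n → |∑ k4 ∈ Finset.range n,
      u ((k1 : ℤ) - k2) * v ((k2 : ℤ) - k3) * w ((k3 : ℤ) - k4) * 1|
      ≤ |u ((k1 : ℤ) - k2)| * |v ((k2 : ℤ) - k3)| * c := by
    intro k1 k2 k3 h
    refine (Finset.abs_sum_le_sum_abs _ _).trans ?_
    simp only [mul_one, abs_mul]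
    rw [← Finset.mul_sum]
    exact mul_le_mul_of_nonneg_left (hw _ h) (by positivity)
  have h2 : ∀ k1 k2 : ℕ, k2 < n → |∑ k3 ∈ Finset.range n, ∑ k4 ∈ Finset.range n,
      u ((k1 : ℤ) - k2) * v ((k2 : ℤ) - k3) * w ((k3 : ℤ) - k4) * 1|
      ≤ |u ((k1 : ℤ) - k2)| * (b * c) := by
    intro k1 k2 h
    refine (Finset.abs_sum_le_sum_abs _ _).trans ?_
    refine (Finset.sum_le_sum fun k3 hk => h3 k1 k2 k3 (Finset.mem_range.1 hk)).trans ?_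
    rw [← Finset.sum_mul, ← Finset.mul_sum, mul_assoc]
    exact mul_le_mul_of_nonneg_left (mul_le_mul_of_nonneg_right (hv _ h) hc) (by positivity)
  have h1 : ∀ k1 : ℕ, k1 < n → |∑ k2 ∈ Finset.range n, ∑ k3 ∈ Finset.range n,
      ∑ k4 ∈ Finset.range n,
      u ((k1 : ℤ) - k2) * v ((k2 : ℤ) - k3) * w ((k3 : ℤ) - k4) * 1|
      ≤ a * b * c := by
    intro k1 h
    refine (Finset.abs_sum_le_sum_abs _ _).trans ?_
    refine (Finset.sum_le_sum fun k3 hk => h2 k1 k3 (Finset.mem_range.1 hk)).trans ?_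
    rw [← Finset.sum_mul, mul_assoc]
    exact mul_le_mul_of_nonneg_right (hu _ h) (by positivity)
  refine (Finset.abs_sum_le_sum_abs _ _).trans ?_
  refine (Finset.sum_le_sum fun k3 hk => h1 k3 (Finset.mem_range.1 hk)).trans ?_
  simp

/-- normalized cyclic sum tends to zero -/
def Van (f1 f2 f3 f4 : ℤ → ℝ) : Prop :=
  Tendsto (fun n : ℕ => (1 / (n : ℝ) ^ 2) * Q n f1 f2 f3 f4) atTop (𝓝 0)

lemma Van.rot {f1 f2 f3 f4 : ℤ → ℝ} (h : Van f1 f2 f3 f4) : Van f2 f3 f4 f1 := by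
  unfold Van at *
  simpa only [Q_rot _ f1 f2 f3 f4] using h

lemma van_tree {u v w : ℤ → ℝ} {r s t : ℝ} (hu : Dec r u) (hv : Dec s v) (hw : Dec t w)
    (hr : 0 ≤ r) (hr1 : r < 1) (hs : 0 ≤ s) (hs1 : s < 1) (ht : 0 ≤ t) (ht1 : t < 1)
    (hsum : 2 < r + s + t) : Van u v w (fun _ => 1) := by
  obtain ⟨A, hA, hA'⟩ := leaf hr hr1 hu
  obtain ⟨B, hB, hB'⟩ := leaf hs hs1 hv
  obtain ⟨C, hC, hC'⟩ := leaf ht ht1 hw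
  have hlim : Tendsto (fun n : ℕ => A * B * C * (n : ℝ) ^ (-(r + s + t - 2))) atTop (𝓝 0) := by
    have := ((tendsto_rpow_neg_atTop (y := r + s + t - 2) (by linarith)).comp
      tendsto_natCast_atTop_atTop).const_mul (A * B * C)
    simpa using this
  refine squeeze_zero_norm' ?_ hlim
  filter_upwards [eventually_gt_atTop 0] with n hn
  have hx : (0:ℝ) < n := by exact_mod_cast hn
  have hq := Q_abs_le n u v w _ _ _ (by positivity) (by positivity) (by positivity)
    (hA' n) (hB' n) (hC' n)
  rw [Real.norm_eq_abs, abs_mul, abs_of_nonneg (by positivity : 0 ≤ 1 / (n:ℝ) ^ 2)]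
  refine (mul_le_mul_of_nonneg_left hq (by positivity)).trans (le_of_eq ?_)
  have e : (n : ℝ) ^ (-(r + s + t - 2)) * (n:ℝ) ^ 2 =
      n * ((n:ℝ) ^ (1 - r) * (n:ℝ) ^ (1 - s) * (n:ℝ) ^ (1 - t)) := by
    rw [← Real.rpow_natCast, ← Real.rpow_add hx, ← Real.rpow_add hx, ← Real.rpow_add hx]
    nth_rw 2 [← Real.rpow_one (n:ℝ)]
    rw [← Real.rpow_add hx]
    congr 1; push_cast; ring
  rw [one_div, inv_mul_eq_iff_eq_mul₀ (by positivity)]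
  linear_combination (-(A * B * C)) * e

lemma van_of_le {f1 f2 f3 f4 g1 g2 g3 g4 p1 p2 p3 p4 : ℤ → ℝ}
    (hg : Van g1 g2 g3 g4) (hp : Van p1 p2 p3 p4)
    (h : ∀ a b c d : ℤ, |f1 a * f2 b * f3 c * f4 d| ≤
      g1 a * g2 b * g3 c * g4 d + p1 a * p2 b * p3 c * p4 d) : Van f1 f2 f3 f4 := by
  have hs : Tendsto (fun n : ℕ => (1 / (n : ℝ) ^ 2) * Q n g1 g2 g3 g4 +
      (1 / (n : ℝ) ^ 2) * Q n p1 p2 p3 p4) atTop (𝓝 0) := by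
    have := Tendsto.add hg hp
    simpa using this
  refine squeeze_zero_norm' (Eventually.of_forall fun n => ?_) hs
  rw [Real.norm_eq_abs, abs_mul, abs_of_nonneg (by positivity : 0 ≤ 1 / (n:ℝ) ^ 2), ← mul_add]
  apply mul_le_mul_of_nonneg_left _ (by positivity)
  unfold Q
  simp only [← Finset.sum_add_distrib]
  refine (Finset.abs_sum_le_sum_abs _ _).trans (Finset.sum_le_sum fun k1 _ => ?_)
  refine (Finset.abs_sum_le_sum_abs _ _).trans (Finset.sum_le_sum fun k2 _ => ?_)
  refine (Finset.abs_sum_le_sum_abs _ _).trans (Finset.sum_le_sum fun k3 _ => ?_)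
  refine (Finset.abs_sum_le_sum_abs _ _).trans (Finset.sum_le_sum fun k4 _ => ?_)
  exact h _ _ _ _

lemma amgm (x y z w : ℝ) : |x * y * z * w| ≤ x ^ 2 * |z| * |w| + y ^ 2 * |z| * |w| := by
  rw [abs_mul, abs_mul, abs_mul, ← add_mul, ← add_mul, ← sq_abs x, ← sq_abs y]
  apply mul_le_mul_of_nonneg_right _ (abs_nonneg w)
  apply mul_le_mul_of_nonneg_right _ (abs_nonneg z)
  nlinarith [sq_nonneg (|x| - |y|), sq_nonneg (|x|), sq_nonneg (|y|)]

/-- squares on opposite edges -/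
lemma van_opp {f1 f2 f3 f4 : ℤ → ℝ} {d r s t : ℝ} (h1 : Dec d f1) (h3 : Dec d f3)
    (h2 : Dec s f2) (h4 : Dec t f4) (hrd : r ≤ 2 * d)
    (hr : 0 ≤ r) (hr1 : r < 1) (hs : 0 ≤ s) (hs1 : s < 1) (ht : 0 ≤ t) (ht1 : t < 1)
    (hsum : 2 < r + s + t) : Van f1 f2 f3 f4 := by
  have a1 : Van (fun k => f1 k ^ 2) (fun k => |f2 k|) (fun _ => 1) (fun k => |f4 k|) :=
    (van_tree h4.abs (h1.sq.mono hrd) h2.abs ht ht1 hr hr1 hs hs1 (by linarith)).rot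
  have a2 : Van (fun _ => 1) (fun k => |f2 k|) (fun k => f3 k ^ 2) (fun k => |f4 k|) :=
    (van_tree h2.abs (h3.sq.mono hrd) h4.abs hs hs1 hr hr1 ht ht1 (by linarith)).rot.rot.rot
  refine van_of_le a1 a2 fun a b c e => ?_
  have := amgm (f1 a) (f3 c) (f2 b) (f4 e)
  calc _ = |f1 a * f3 c * f2 b * f4 e| := by congr 1; ring
    _ ≤ _ := this
    _ = _ := by ring

/-- squares on adjacent edges -/
lemma van_adj {f1 f2 f3 f4 : ℤ → ℝ} {d r s t : ℝ} (h1 : Dec d f1) (h2 : Dec d f2)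
    (h3 : Dec s f3) (h4 : Dec t f4) (hrd : r ≤ 2 * d)
    (hr : 0 ≤ r) (hr1 : r < 1) (hs : 0 ≤ s) (hs1 : s < 1) (ht : 0 ≤ t) (ht1 : t < 1)
    (hsum : 2 < r + s + t) : Van f1 f2 f3 f4 := by
  have a1 : Van (fun k => f1 k ^ 2) (fun _ => 1) (fun k => |f3 k|) (fun k => |f4 k|) :=
    (van_tree h3.abs h4.abs (h1.sq.mono hrd) hs hs1 ht ht1 hr hr1 (by linarith)).rot.rot
  have a2 : Van (fun _ => 1) (fun k => f2 k ^ 2) (fun k => |f3 k|) (fun k => |f4 k|) :=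
    (van_tree (h2.sq.mono hrd) h3.abs h4.abs hr hr1 hs hs1 ht ht1 (by linarith)).rot.rot.rot
  refine van_of_le a1 a2 fun a b c e => ?_
  have := amgm (f1 a) (f2 b) (f3 c) (f4 e)
  calc _ ≤ _ := this
    _ = _ := by ring

/-- the alternating case; the slower decaying function is squared -/
lemma van_alt {f g : ℤ → ℝ} {A B : ℝ} (hf : Dec A f) (hg : Dec B g) (hB : 0 < B) (hBA : B ≤ A)
    (hAB : 1 < A + B) : Van g f g f := by
  obtain ⟨ε, h0, h1, h2, h3⟩ : ∃ ε : ℝ, 0 < ε ∧ ε < 2 * A - 1 ∧ ε < B ∧ ε < 1 / 4 := by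
    obtain ⟨ε, h, h'⟩ := exists_between
      (show (0:ℝ) < min (2 * A - 1) (min B (1 / 4)) by
        refine lt_min (by linarith) (lt_min hB (by norm_num)))
    rw [lt_min_iff, lt_min_iff] at h'
    exact ⟨ε, h, h'.1, h'.2.1, h'.2.2⟩
  have hA' : min A (1 - ε) < 1 := (min_le_right _ _).trans_lt (by linarith)
  have hA0 : 0 ≤ min A (1 - ε) := le_min (by linarith) (by linarith)
  refine van_opp (r := min (2 * B) (1 - ε)) hg hg (hf.mono (min_le_left A (1 - ε)))
    (hf.mono (min_le_left A (1 - ε))) (min_le_left _ _) (le_min (by linarith) (by linarith))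
    ((min_le_right _ _).trans_lt (by linarith)) hA0 hA' hA0 hA' ?_
  rcases min_choice (2 * B) (1 - ε) with h | h <;>
  rcases min_choice A (1 - ε) with h' | h' <;> rw [h, h'] <;> linarith

/-- Lemma 3.6 of the paper: vanishing of normalized fourfold sums of products of
(cross-)covariance-like functions when `H = H₁ + H₂ < 3/2`. -/
theorem stmt11
    (H1 H2 : ℝ) (h1 : H1 ∈ Set.Ioo (0:ℝ) 1) (h2 : H2 ∈ Set.Ioo (0:ℝ) 1)
    (hH : H1 + H2 < 3 / 2)
    (γ11 γ22 γ12 γ21 : ℤ → ℝ)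
    (hb11 : ∀ k, |γ11 k| ≤ γ11 0) (hb22 : ∀ k, |γ22 k| ≤ γ22 0)
    (hb12 : ∀ k, |γ12 k| ≤ γ12 0) (hb21 : ∀ k, |γ21 k| ≤ γ21 0)
    (ℓ11 ℓ22 ℓ12 ℓ21 : ℝ)
    (hℓ11 : 0 < ℓ11) (hℓ22 : 0 < ℓ22) (hℓ12 : 0 < ℓ12) (hℓ21 : 0 < ℓ21)
    (hlim11 : Tendsto (fun k : ℤ => |γ11 k| / |(k : ℝ)| ^ (2 * H1 - 2))
      (cocompact ℤ) (𝓝 ℓ11))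
    (hlim22 : Tendsto (fun k : ℤ => |γ22 k| / |(k : ℝ)| ^ (2 * H2 - 2))
      (cocompact ℤ) (𝓝 ℓ22))
    (hlim12 : Tendsto (fun k : ℤ => |γ12 k| / |(k : ℝ)| ^ (H1 + H2 - 2))
      (cocompact ℤ) (𝓝 ℓ12))
    (hlim21 : Tendsto (fun k : ℤ => |γ21 k| / |(k : ℝ)| ^ (H1 + H2 - 2))
      (cocompact ℤ) (𝓝 ℓ21)) :
    Tendsto (fun n : ℕ => (1 / (n : ℝ) ^ 2) *
        ∑ k1 ∈ Finset.range n, ∑ k2 ∈ Finset.range n,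
          ∑ k3 ∈ Finset.range n, ∑ k4 ∈ Finset.range n,
            γ11 ((k1 : ℤ) - k2) * γ22 ((k2 : ℤ) - k3) *
              γ11 ((k3 : ℤ) - k4) * γ22 ((k4 : ℤ) - k1)) atTop (𝓝 0) ∧
    Tendsto (fun n : ℕ => (1 / (n : ℝ) ^ 2) *
        ∑ k1 ∈ Finset.range n, ∑ k2 ∈ Finset.range n,
          ∑ k3 ∈ Finset.range n, ∑ k4 ∈ Finset.range n,
            γ12 ((k1 : ℤ) - k2) * γ12 ((k2 : ℤ) - k3) *
              γ12 ((k3 : ℤ) - k4) * γ12 ((k4 : ℤ) - k1)) atTop (𝓝 0) ∧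
    Tendsto (fun n : ℕ => (1 / (n : ℝ) ^ 2) *
        ∑ k1 ∈ Finset.range n, ∑ k2 ∈ Finset.range n,
          ∑ k3 ∈ Finset.range n, ∑ k4 ∈ Finset.range n,
            γ12 ((k1 : ℤ) - k2) * γ12 ((k2 : ℤ) - k3) *
              γ11 ((k3 : ℤ) - k4) * γ22 ((k4 : ℤ) - k1)) atTop (𝓝 0) ∧
    Tendsto (fun n : ℕ => (1 / (n : ℝ) ^ 2) *
        ∑ k1 ∈ Finset.range n, ∑ k2 ∈ Finset.range n,
          ∑ k3 ∈ Finset.range n, ∑ k4 ∈ Finset.range n,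
            γ12 ((k1 : ℤ) - k2) * γ11 ((k2 : ℤ) - k3) *
              γ21 ((k3 : ℤ) - k4) * γ22 ((k4 : ℤ) - k1)) atTop (𝓝 0) := by
  obtain ⟨h1a, h1b⟩ := h1
  obtain ⟨h2a, h2b⟩ := h2
  have d11 : Dec (2 - 2 * H1) γ11 := dec_of_lim hb11 (by linarith)
    (by rw [show -(2 - 2 * H1) = 2 * H1 - 2 by ring]; exact hlim11)
  have d22 : Dec (2 - 2 * H2) γ22 := dec_of_lim hb22 (by linarith)
    (by rw [show -(2 - 2 * H2) = 2 * H2 - 2 by ring]; exact hlim22)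
  have d12 : Dec (2 - (H1 + H2)) γ12 := dec_of_lim hb12 (by linarith)
    (by rw [show -(2 - (H1 + H2)) = H1 + H2 - 2 by ring]; exact hlim12)
  have d21 : Dec (2 - (H1 + H2)) γ21 := dec_of_lim hb21 (by linarith)
    (by rw [show -(2 - (H1 + H2)) = H1 + H2 - 2 by ring]; exact hlim21)
  generalize hA : 2 - 2 * H1 = A at d11
  generalize hB : 2 - 2 * H2 = B at d22
  generalize hC : 2 - (H1 + H2) = C at d12 d21
  obtain ⟨ε, e0, e1, e2, e3, e4⟩ : ∃ ε : ℝ, 0 < ε ∧ ε < A + B - 1 ∧ 2 * ε < A ∧ 2 * ε < B ∧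
      ε < 1 / 4 := by
    obtain ⟨ε, h, h'⟩ := exists_between
      (show (0:ℝ) < min (A + B - 1) (min (A / 2) (min (B / 2) (1 / 4))) by
        refine lt_min (by linarith) (lt_min (by linarith) (lt_min (by linarith) (by norm_num))))
    rw [lt_min_iff, lt_min_iff, lt_min_iff] at h'
    exact ⟨ε, h, h'.1, by linarith [h'.2.1], by linarith [h'.2.2.1], h'.2.2.2⟩
  have lt1 : ∀ x : ℝ, min x (1 - ε) < 1 := fun x => (min_le_right _ _).trans_lt (by linarith)
  have ge0 : ∀ x : ℝ, 0 < x → 0 ≤ min x (1 - ε) := fun x hx => le_min hx.le (by linarith)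
  have m11 := d11.mono (min_le_left A (1 - ε))
  have m22 := d22.mono (min_le_left B (1 - ε))
  have m12 := d12.mono (min_le_left C (1 - ε))
  have hsum : 2 < (1 - ε) + min A (1 - ε) + min B (1 - ε) := by
    rcases min_choice A (1 - ε) with h | h <;>
    rcases min_choice B (1 - ε) with h' | h' <;> rw [h, h'] <;> linarith
  have hsumC : 2 < (1 - ε) + min C (1 - ε) + min C (1 - ε) := by
    rcases min_choice C (1 - ε) with h | h <;> rw [h] <;> linarith
  refine ⟨?_, ?_, ?_, ?_⟩
  · change Van γ11 γ22 γ11 γ22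
    rcases le_total B A with h | h
    · exact (van_alt d11 d22 (by linarith) h (by linarith)).rot
    · exact van_alt d22 d11 (by linarith) h (by linarith)
  · change Van γ12 γ12 γ12 γ12
    exact van_opp (r := 1 - ε) d12 d12 m12 m12 (by linarith) (by linarith) (by linarith)
      (ge0 _ (by linarith)) (lt1 _) (ge0 _ (by linarith)) (lt1 _) hsumC
  · change Van γ12 γ12 γ11 γ22
    exact van_adj (r := 1 - ε) d12 d12 m11 m22 (by linarith) (by linarith) (by linarith)
      (ge0 _ (by linarith)) (lt1 _) (ge0 _ (by linarith)) (lt1 _) hsum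
  · change Van γ12 γ11 γ21 γ22
    exact van_opp (r := 1 - ε) d12 d21 m11 m22 (by linarith) (by linarith) (by linarith)
      (ge0 _ (by linarith)) (lt1 _) (ge0 _ (by linarith)) (lt1 _) hsum
end

section
/- Let $p\ge 2$ be an integer, $\beta_1,\dots,\beta_p\in(0,1)$ with $\sum_{i=1}^{p}\beta_i<p-1$, and let $g_1,\dots,g_p:\mathbb{Z}\to\mathbb{R}$ be bounded functions such that for each $i$ there exist $\ell_i^{+},\ell_i^{-}\in\mathbb{R}$ with $\lim_{k\to+\infty}k^{\beta_i}g_i(k)=\ell_i^{+}$ and $\lim_{k\to+\infty}k^{\beta_i}g_i(-k)=\ell_i^{-}$. Define $h_i:\mathbb{R}\setminus\{0\}\to\mathbb{R}$ by $h_i(t)=\ell_i^{+}t^{-\beta_i}$ for $t>0$ and $h_i(t)=\ell_i^{-}(-t)^{-\beta_i}$ for $t<0$. Then, with the cyclic convention $k_{p+1}:=k_1$ and $x_{p+1}:=x_1$, $\lim_{n\to\infty}\;n^{\sum_{i=1}^{p}\beta_i-p}\sum_{k_1,\dots,k_p=1}^{n}\prod_{i=1}^{p}g_i(k_{i+1}-k_i)=\int_{[0,1]^{p}}\prod_{i=1}^{p}h_i(x_{i+1}-x_i)\,dx_1\cdots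 dx_p$, the integral on the right being finite. -/
open MeasureTheory Filter Asymptotics Topology Real

lemma aux_int1 (γ : ℝ) (hγ : γ < 1) :
    Integrable ((Set.Icc (-1:ℝ) 1).indicator fun t => |t| ^ (-γ)) := by
  rw [integrable_indicator_iff measurableSet_Icc]
  have h1 : IntervalIntegrable (fun t : ℝ => |t| ^ (-γ)) volume 0 1 := by
    refine (intervalIntegral.intervalIntegrable_rpow' (a := 0) (b := 1) (r := -γ) (by linarith)).congr ?_
    intro t ht
    rw [Set.uIoc_of_le zero_le_one] at ht
    simp [abs_of_pos ht.1]
  have h2 : IntervalIntegrable (fun t : ℝ => |t| ^ (-γ)) volume (-1) 0 := by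
    have := (IntervalIntegrable.iff_comp_neg (f := fun t : ℝ => |t| ^ (-γ)) (a := 0) (b := 1)).1 h1
    simpa using this.symm
  have h3 := h2.trans h1
  rwa [intervalIntegrable_iff_integrableOn_Icc_of_le (by norm_num)] at h3

noncomputable def auxT (p : ℕ) (j : Fin p) : (Fin p → ℝ) →ₗ[ℝ] (Fin p → ℝ) :=
  LinearMap.pi fun i => if i = j then (LinearMap.proj j : (Fin p → ℝ) →ₗ[ℝ] ℝ)
    else (LinearMap.proj (finRotate p i) : (Fin p → ℝ) →ₗ[ℝ] ℝ) - LinearMap.proj i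

lemma auxT_apply (p : ℕ) (j : Fin p) (x : Fin p → ℝ) (i : Fin p) :
    auxT p j x i = if i = j then x j else x (finRotate p i) - x i := by
  unfold auxT
  rw [LinearMap.pi_apply]
  split_ifs <;> simp

lemma auxT_det (p : ℕ) (j : Fin p) : LinearMap.det (auxT p j) ≠ 0 := by
  have hinj : Function.Injective (auxT p j) := by
    rw [← LinearMap.ker_eq_bot, LinearMap.ker_eq_bot']
    intro x hx
    have hx' : ∀ i, (if i = j then x j else x (finRotate p i) - x i) = 0 := by
      intro i; rw [← auxT_apply, hx]; rfl
    have hj : x j = 0 := by simpa using hx' j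
    have hs : ∑ i, (x (finRotate p i) - x i) = 0 := by
      rw [Finset.sum_sub_distrib, Equiv.sum_comp (finRotate p) x, sub_self]
    have hs2 : x (finRotate p j) - x j = 0 := by
      rw [← hs]
      symm
      apply Finset.sum_eq_single_of_mem j (Finset.mem_univ _)
      intro i _ hi
      simpa [hi] using hx' i
    have hall : ∀ i, x (finRotate p i) = x i := by
      intro i
      by_cases hi : i = j
      · subst hi; linarith
      · have := hx' i
        rw [if_neg hi] at this
        linarith
    have hc : ∀ i k, x i = x k := by
      cases p with
      | zero => exact fun i => i.elim0
      | succ m =>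
        have : ∀ i, x i = x 0 := by
          intro i
          induction i using Fin.induction with
          | zero => rfl
          | succ i ih =>
            rw [← ih, ← hall i.castSucc, finRotate_apply]
            simp
        intro i k
        rw [this i, this k]
    funext i
    rw [hc i j, hj]; rfl
  have := LinearMap.isUnit_iff_ker_eq_bot (auxT p j) |>.2 (LinearMap.ker_eq_bot.2 hinj)
  exact (LinearMap.isUnit_det _ this).ne_zero

lemma aux_path (p : ℕ) (j : Fin p) (γ : Fin p → ℝ) (hγ : ∀ i, γ i < 1) :
    IntegrableOn (fun x : Fin p → ℝ => ∏ i, if i = j then 1 else |x (finRotate p i) - x i| ^ (-γ i))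
      (Set.univ.pi fun _ : Fin p => Set.Icc (0:ℝ) 1) := by
  let f : Fin p → ℝ → ℝ := fun i => (Set.Icc (-1:ℝ) 1).indicator
    fun t => |t| ^ (-(if i = j then 0 else γ i))
  have hf : ∀ i, Integrable (f i) := by
    intro i
    apply aux_int1
    split_ifs
    · norm_num
    · exact hγ i
  have hF : Integrable (fun y : Fin p → ℝ => ∏ i, f i (y i)) := Integrable.fintype_prod hf
  have hT : Measurable (auxT p j) := (LinearMap.continuous_of_finiteDimensional _).measurable
  have hmap := Measure.map_linearMap_addHaar_eq_smul_addHaar (volume : Measure (Fin p → ℝ)) (auxT_det p j)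
  have h1 : Integrable (fun y : Fin p → ℝ => ∏ i, f i (y i)) (Measure.map (auxT p j) volume) := by
    rw [hmap]
    exact hF.smul_measure (by simp)
  have h2 := h1.comp_measurable hT
  refine (h2.integrableOn).congr_fun ?_ (MeasurableSet.univ_pi fun _ => measurableSet_Icc)
  intro x hx
  simp only [Set.mem_univ_pi, Set.mem_Icc] at hx
  simp only [Function.comp]
  apply Finset.prod_congr rfl
  intro i _
  have a1 := hx i
  have a2 := hx j
  have a3 := hx (finRotate p i)
  rw [auxT_apply]
  simp only [f]
  rw [Set.indicator_of_mem]
  · split_ifs <;> simp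
  · split_ifs
    · constructor <;> linarith
    · constructor <;> linarith

lemma aux_cyc (p : ℕ) (hp : 2 ≤ p)
    (β : Fin p → ℝ) (hβ : ∀ i, β i ∈ Set.Ioo (0:ℝ) 1)
    (hsum : ∑ i, β i < (p : ℝ) - 1) :
    IntegrableOn (fun x : Fin p → ℝ => ∏ i, |x (finRotate p i) - x i| ^ (-β i))
      (Set.univ.pi fun _ : Fin p => Set.Icc (0:ℝ) 1) := by
  set S : ℝ := ∑ i, (1 - β i) with hS
  have hS1 : 1 < S := by
    rw [hS, Finset.sum_sub_distrib]; simp; linarith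
  let w : Fin p → ℝ := fun i => (1 - β i) / S
  have hw0 : ∀ i, 0 < w i := fun i => div_pos (by linarith [(hβ i).2]) (by linarith)
  have hw1 : ∀ i, w i < 1 - β i := fun i => div_lt_self (by linarith [(hβ i).2]) hS1
  have hws : ∑ i, w i = 1 := by
    simp only [w]; rw [← Finset.sum_div, ← hS]; exact div_self (by linarith)
  let γ : Fin p → ℝ := fun i => β i / (1 - w i)
  have hγ : ∀ i, γ i < 1 := by
    intro i
    have := hw1 i
    have := (hβ i).1
    simp only [γ]
    rw [div_lt_one (by linarith)]; linarith
  have hd : IntegrableOn (fun x : Fin p → ℝ => ∑ j, w j * ∏ i, if i = j then 1 else |x (finRotate p i) - x i| ^ (-γ i))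
      (Set.univ.pi fun _ : Fin p => Set.Icc (0:ℝ) 1) := by
    apply integrable_finsetSum
    intro j _
    exact (aux_path p j γ hγ).const_mul _
  refine Integrable.mono' hd (Measurable.aestronglyMeasurable (Finset.measurable_fun_prod _ fun i _ => by fun_prop)) ?_
  filter_upwards with x
  rw [Real.norm_of_nonneg (by positivity)]
  have hb : ∀ i, 0 ≤ |x (finRotate p i) - x i| ^ (-γ i) := fun i => by positivity
  refine le_trans (le_of_eq ?_) (Real.geom_mean_le_arith_mean_weighted Finset.univ w _ (fun i _ => (hw0 i).le) hws ?_)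
  · have e0 : ∀ j, (∏ i, if i = j then (1:ℝ) else |x (finRotate p i) - x i| ^ (-γ i)) ^ w j
        = ∏ i, (if i = j then (1:ℝ) else |x (finRotate p i) - x i| ^ (-γ i)) ^ w j := by
      intro j
      refine (Real.finsetProd_rpow _ _ (fun i _ => ?_) _).symm
      split_ifs
      · exact zero_le_one
      · exact hb i
    simp_rw [e0]
    rw [Finset.prod_comm]
    apply Finset.prod_congr rfl
    intro i _
    have e : ∀ j, (if i = j then (1:ℝ) else |x (finRotate p i) - x i| ^ (-γ i)) ^ w j
        = (|x (finRotate p i) - x i| ^ (-γ i)) ^ (if i = j then 0 else w j) := by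
      intro j; split_ifs <;> simp
    simp_rw [e]
    rw [← Real.rpow_sum_of_nonneg (hb i), ← Real.rpow_mul (abs_nonneg _)]
    · congr 1
      have : ∑ j, (if i = j then 0 else w j) = 1 - w i := by
        rw [← hws, ← Finset.sum_erase_eq_sub (Finset.mem_univ i), Finset.sum_ite]
        simp [Finset.filter_ne]
      rw [this]
      have := hw1 i
      have := (hβ i).1
      have : 1 - w i ≠ 0 := by linarith
      simp only [γ]; field_simp
    · intro j _; split_ifs
      · exact le_rfl
      · exact (hw0 j).le
  · intro j _
    apply Finset.prod_nonneg
    intro i _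
    split_ifs
    · exact zero_le_one
    · exact hb i

lemma aux_ae (p : ℕ) (hp : 2 ≤ p) :
    ∀ᵐ x : Fin p → ℝ, ∀ i, x (finRotate p i) ≠ x i := by
  rw [ae_all_iff]
  intro i
  have hne : finRotate p i ≠ i := by
    obtain ⟨m, rfl⟩ : ∃ m, p = m + 2 := ⟨p - 2, by omega⟩
    rw [finRotate_apply]
    simp
  let V : Submodule ℝ (Fin p → ℝ) := LinearMap.ker
    ((LinearMap.proj (finRotate p i) : (Fin p → ℝ) →ₗ[ℝ] ℝ) - LinearMap.proj i)
  have hV : V ≠ ⊤ := by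
    intro h
    have : (Pi.single i 1 : Fin p → ℝ) ∈ V := by rw [h]; trivial
    rw [LinearMap.mem_ker, LinearMap.sub_apply, LinearMap.proj_apply, LinearMap.proj_apply,
      Pi.single_eq_of_ne hne, Pi.single_eq_same] at this
    norm_num at this
  have := Measure.addHaar_submodule (volume : Measure (Fin p → ℝ)) V hV
  rw [ae_iff]
  convert this using 2
  ext x
  simp [V, sub_eq_zero]

lemma aux_gb (b : ℝ) (g : ℤ → ℝ) (hb : ∃ C : ℝ, ∀ k : ℤ, |g k| ≤ C) (lp lm : ℝ)
    (hgp : Tendsto (fun k : ℕ => (k : ℝ) ^ b * g (k : ℤ)) atTop (𝓝 lp))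
    (hgm : Tendsto (fun k : ℕ => (k : ℝ) ^ b * g (-(k : ℤ))) atTop (𝓝 lm)) :
    ∃ C : ℝ, 0 ≤ C ∧ (∀ k, |g k| ≤ C) ∧ (∀ k : ℤ, |(k:ℝ)| ^ b * |g k| ≤ C) ∧ |lp| ≤ C ∧ |lm| ≤ C := by
  obtain ⟨C0, h0⟩ := hb
  obtain ⟨C1, h1⟩ := (Metric.isBounded_range_of_tendsto _ hgp).exists_norm_le
  obtain ⟨C2, h2⟩ := (Metric.isBounded_range_of_tendsto _ hgm).exists_norm_le
  have h1' : ∀ k : ℕ, (k:ℝ) ^ b * |g k| ≤ C1 := by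
    intro k
    have := h1 _ ⟨k, rfl⟩
    rwa [norm_mul, Real.norm_of_nonneg (by positivity), Real.norm_eq_abs] at this
  have h2' : ∀ k : ℕ, (k:ℝ) ^ b * |g (-k)| ≤ C2 := by
    intro k
    have := h2 _ ⟨k, rfl⟩
    rwa [norm_mul, Real.norm_of_nonneg (by positivity), Real.norm_eq_abs] at this
  let C := max (max (max C0 C1) C2) (max |lp| |lm|)
  refine ⟨C, ?_, ?_, ?_, ?_, ?_⟩
  · exact le_trans (abs_nonneg lp) (by simp [C])
  · intro k; exact (h0 k).trans (by simp [C])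
  · intro k
    obtain ⟨m, rfl | rfl⟩ := k.eq_nat_or_neg
    · refine le_trans ?_ ((h1' m).trans (by simp [C]))
      simp
    · refine le_trans ?_ ((h2' m).trans (by simp [C]))
      simp
  · simp [C]
  · simp [C]

lemma aux_dom (b : ℝ) (hb : 0 < b) (g : ℤ → ℝ) (C : ℝ) (h0 : ∀ k, |g k| ≤ C)
    (h1 : ∀ k : ℤ, |(k:ℝ)| ^ b * |g k| ≤ C) (n : ℕ) (hn : 0 < n) (x y : ℝ) (hx : 0 ≤ x) (hy : 0 ≤ y)
    (hxy : y ≠ x) :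
    |(n:ℝ) ^ b * g ((⌈x * n⌉₊ : ℤ) - (⌈y * n⌉₊ : ℤ))| ≤ C * 2 ^ b * |x - y| ^ (-b) := by
  set k : ℤ := (⌈x * n⌉₊ : ℤ) - (⌈y * n⌉₊ : ℤ) with hk
  have hn' : (0:ℝ) < n := by exact_mod_cast hn
  have hd : 0 < |x - y| := abs_pos.2 (sub_ne_zero.2 hxy.symm)
  set d := |x - y| with hdd
  have hC : 0 ≤ C := (abs_nonneg _).trans (h0 0)
  have key : (n * d / 2) ^ b * |g k| ≤ C := by
    rcases le_total (n * d / 2) 1 with h | h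
    · calc _ ≤ 1 * |g k| := by
            gcongr
            exact Real.rpow_le_one (by positivity) h hb.le
        _ ≤ C := by rw [one_mul]; exact h0 k
    · refine le_trans ?_ (h1 k)
      gcongr
      have e1 := Nat.le_ceil (x * n)
      have e2 := Nat.ceil_lt_add_one (a := x * n) (by positivity)
      have e3 := Nat.le_ceil (y * n)
      have e4 := Nat.ceil_lt_add_one (a := y * n) (by positivity)
      have e5 : n * d ≤ |(k:ℝ)| + 1 := by
        have : (n:ℝ) * d = |x * n - y * n| := by
          rw [← sub_mul, abs_mul, abs_of_pos hn']; ring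
        rw [this]
        have hk' : (k:ℝ) = (⌈x * n⌉₊ : ℝ) - (⌈y * n⌉₊ : ℝ) := by simp [hk]
        have := le_abs_self (k:ℝ)
        have := neg_abs_le (k:ℝ)
        rw [abs_le]
        constructor <;> linarith
      linarith
  rw [abs_mul, abs_of_nonneg (by positivity : (0:ℝ) ≤ (n:ℝ) ^ b)]
  have e : (n:ℝ) ^ b = (n * d / 2) ^ b * (2 ^ b * d ^ (-b)) := by
    rw [Real.rpow_neg hd.le, ← Real.inv_rpow hd.le, ← Real.mul_rpow (by positivity) (by positivity), ← Real.mul_rpow (by positivity) (by positivity)]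
    congr 1; field_simp
  calc (n:ℝ) ^ b * |g k| = ((n * d / 2) ^ b * |g k|) * (2 ^ b * d ^ (-b)) := by rw [e]; ring
    _ ≤ C * (2 ^ b * d ^ (-b)) := by gcongr
    _ = _ := by ring

lemma aux_lim (b : ℝ) (g : ℤ → ℝ) (lp : ℝ)
    (hgp : Tendsto (fun k : ℕ => (k : ℝ) ^ b * g (k : ℤ)) atTop (𝓝 lp)) (x y : ℝ) (hy : 0 ≤ y) (hxy : y < x) :
    Tendsto (fun n : ℕ => (n:ℝ) ^ b * g ((⌈x * n⌉₊ : ℤ) - (⌈y * n⌉₊ : ℤ))) atTop (𝓝 (lp * (x - y) ^ (-b))) := by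
  have hx : 0 ≤ x := by linarith
  have hd : 0 < x - y := by linarith
  let m : ℕ → ℕ := fun n => ⌈x * n⌉₊ - ⌈y * n⌉₊
  have hm : ∀ n : ℕ, (m n : ℤ) = (⌈x * n⌉₊ : ℤ) - (⌈y * n⌉₊ : ℤ) := by
    intro n
    have : ⌈y * n⌉₊ ≤ ⌈x * (n:ℝ)⌉₊ := Nat.ceil_mono (by gcongr)
    simp only [m]; omega
  have hmr : ∀ n : ℕ, (m n : ℝ) = (⌈x * n⌉₊ : ℝ) - (⌈y * n⌉₊ : ℝ) := by
    intro n; exact_mod_cast hm n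
  have hlim : Tendsto (fun n : ℕ => (m n : ℝ) / n) atTop (𝓝 (x - y)) := by
    have h1 := (tendsto_nat_ceil_mul_div_atTop hx).comp tendsto_natCast_atTop_atTop
    have h2 := (tendsto_nat_ceil_mul_div_atTop hy).comp tendsto_natCast_atTop_atTop
    refine (h1.sub h2).congr ?_
    intro n
    simp [hmr, sub_div]
  have hinf : Tendsto m atTop atTop := by
    have : Tendsto (fun n : ℕ => (m n : ℝ) / n * n) atTop atTop :=
      hlim.pos_mul_atTop hd tendsto_natCast_atTop_atTop
    rw [← tendsto_natCast_atTop_iff (R := ℝ)]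
    refine this.congr' ?_
    filter_upwards [eventually_gt_atTop 0] with n hn
    have : (n:ℝ) ≠ 0 := by positivity
    field_simp
  have h3 := (hgp.comp hinf).mul (hlim.rpow_const (p := -b) (Or.inl hd.ne'))
  refine h3.congr' ?_
  filter_upwards [eventually_gt_atTop 0, hinf.eventually_gt_atTop 0] with n hn hmn
  simp only [Function.comp]
  rw [← hm]
  have hn' : (0:ℝ) < n := by exact_mod_cast hn
  have hm' : (0:ℝ) < m n := by exact_mod_cast hmn
  rw [Real.rpow_neg (by positivity), Real.div_rpow hm'.le hn'.le]
  have : (m n : ℝ) ^ b ≠ 0 := by positivity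
  have : (n : ℝ) ^ b ≠ 0 := by positivity
  field_simp

lemma aux_sum (p : ℕ) (F : (Fin p → ℕ) → ℝ) (n : ℕ) (hn : 0 < n) :
    ∫ x in Set.univ.pi fun _ : Fin p => Set.Ioc (0:ℝ) 1, F (fun i => ⌈x i * n⌉₊)
      = (n:ℝ) ^ (-(p:ℝ)) * ∑ k ∈ Fintype.piFinset (fun _ : Fin p => Finset.Icc 1 n), F k := by
  have hn' : (0:ℝ) < n := by exact_mod_cast hn
  let s : (Fin p → ℕ) → Set (Fin p → ℝ) := fun k => Set.univ.pi fun i => Set.Ioc (((k i:ℝ) - 1) / n) ((k i : ℝ) / n)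
  have hmem : ∀ k ∈ Fintype.piFinset (fun _ : Fin p => Finset.Icc 1 n), ∀ x, x ∈ s k ↔ ∀ i, ⌈x i * n⌉₊ = k i := by
    intro k hk x
    simp only [s, Set.mem_univ_pi, Set.mem_Ioc]
    apply forall_congr'
    intro i
    have := Fintype.mem_piFinset.1 hk i
    rw [Finset.mem_Icc] at this
    rw [Nat.ceil_eq_iff (by omega), div_lt_iff₀ hn', le_div_iff₀ hn', Nat.cast_sub this.1]
    simp
  have hU : (Set.univ.pi fun _ : Fin p => Set.Ioc (0:ℝ) 1) = ⋃ k ∈ Fintype.piFinset (fun _ : Fin p => Finset.Icc 1 n), s k := by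
    ext x
    simp only [Set.mem_iUnion, exists_prop]
    constructor
    · intro hx
      have hk : (fun i => ⌈x i * n⌉₊) ∈ Fintype.piFinset (fun _ : Fin p => Finset.Icc 1 n) := by
        rw [Fintype.mem_piFinset]
        intro i
        have := hx i trivial
        rw [Finset.mem_Icc]
        refine ⟨Nat.ceil_pos.2 (mul_pos this.1 hn'), Nat.ceil_le.2 ?_⟩
        nlinarith [this.2]
      exact ⟨_, hk, (hmem _ hk x).2 fun i => rfl⟩
    · rintro ⟨k, hk, hx⟩ i -
      have h1 := (hmem k hk x).1 hx i
      have := Fintype.mem_piFinset.1 hk i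
      rw [Finset.mem_Icc, ← h1] at this
      have h2 := Nat.ceil_pos.1 this.1
      have h3 := Nat.ceil_le.1 this.2
      constructor
      · exact pos_of_mul_pos_left h2 hn'.le
      · by_contra hc
        push Not at hc
        nlinarith
  have hms : ∀ k, MeasurableSet (s k) := fun k => MeasurableSet.univ_pi fun _ => measurableSet_Ioc
  have hvol : ∀ k, volume.real (s k) = (n:ℝ) ^ (-(p:ℝ)) := by
    intro k
    rw [measureReal_def]
    simp only [s]
    rw [Real.volume_pi_Ioc_toReal]
    · have : ∀ i, (k i : ℝ) / n - ((k i : ℝ) - 1) / n = (n:ℝ)⁻¹ := by intro i; field_simp; ring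
      simp [this, Real.rpow_neg hn'.le]
    · intro i
      show ((k i : ℝ) - 1) / n ≤ (k i : ℝ) / n
      gcongr; linarith
  have hfin : ∀ k, volume (s k) ≠ ⊤ := by
    intro k
    simp only [s]
    rw [Real.volume_pi_Ioc]
    exact ENNReal.prod_ne_top fun _ _ => ENNReal.ofReal_ne_top
  have hcongr : ∀ k ∈ Fintype.piFinset (fun _ : Fin p => Finset.Icc 1 n), Set.EqOn (fun x : Fin p → ℝ => F (fun i => ⌈x i * n⌉₊)) (fun _ => F k) (s k) := by
    intro k hk x hx
    simp only
    congr 1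
    funext i
    exact (hmem k hk x).1 hx i
  rw [hU, integral_biUnion_finset]
  · rw [Finset.mul_sum]
    apply Finset.sum_congr rfl
    intro k hk
    rw [setIntegral_congr_fun (hms k) (hcongr k hk), setIntegral_const, hvol, smul_eq_mul]
  · exact fun k _ => hms k
  · intro k hk k' hk' hne
    rw [Function.onFun, Set.disjoint_left]
    intro x hx hx'
    apply hne
    funext i
    rw [← (hmem k hk x).1 hx i, ← (hmem k' hk' x).1 hx' i]
  · intro k hk
    exact (integrableOn_const (hfin k)).congr_fun (hcongr k hk).symm (hms k)

theorem stmt15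
    (p : ℕ) (hp : 2 ≤ p)
    (β : Fin p → ℝ) (hβ : ∀ i, β i ∈ Set.Ioo (0:ℝ) 1)
    (hsum : ∑ i, β i < (p : ℝ) - 1)
    (g : Fin p → ℤ → ℝ)
    (hg_bdd : ∀ i, ∃ C : ℝ, ∀ k : ℤ, |g i k| ≤ C)
    (ℓp ℓm : Fin p → ℝ)
    (hgp : ∀ i, Tendsto (fun k : ℕ => (k : ℝ) ^ (β i) * g i (k : ℤ)) atTop (𝓝 (ℓp i)))
    (hgm : ∀ i, Tendsto (fun k : ℕ => (k : ℝ) ^ (β i) * g i (-(k : ℤ))) atTop (𝓝 (ℓm i)))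
    (h : Fin p → ℝ → ℝ)
    (hh : ∀ i t, h i t = if 0 < t then ℓp i * t ^ (-(β i)) else ℓm i * (-t) ^ (-(β i))) :
    IntegrableOn (fun x : Fin p → ℝ => ∏ i, h i (x (finRotate p i) - x i))
      (Set.univ.pi fun _ : Fin p => Set.Icc (0:ℝ) 1) ∧
    Tendsto (fun n : ℕ =>
        (n : ℝ) ^ (∑ i, β i - (p : ℝ)) *
          ∑ k ∈ Fintype.piFinset (fun _ : Fin p => Finset.Icc 1 n),
            ∏ i, g i ((k (finRotate p i) : ℤ) - (k i : ℤ)))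
      atTop
      (𝓝 (∫ x in Set.univ.pi fun _ : Fin p => Set.Icc (0:ℝ) 1,
        ∏ i, h i (x (finRotate p i) - x i))) := by
  have hcyc := aux_cyc p hp β hβ hsum
  choose C hC0 hC1 hC2 hCp hCm using fun i =>
    aux_gb (β i) (g i) (hg_bdd i) (ℓp i) (ℓm i) (hgp i) (hgm i)
  have hae : (Set.univ.pi fun _ : Fin p => Set.Ioc (0:ℝ) 1) =ᵐ[volume]
      (Set.univ.pi fun _ : Fin p => Set.Icc (0:ℝ) 1) := by
    rw [Set.pi_univ_Icc]
    exact Measure.univ_pi_Ioc_ae_eq_Icc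
  have hhm : ∀ i, Measurable (h i) := by
    intro i
    have : h i = fun t => if 0 < t then ℓp i * t ^ (-(β i)) else ℓm i * (-t) ^ (-(β i)) :=
      funext (hh i)
    rw [this]
    exact Measurable.ite measurableSet_Ioi (by fun_prop) (by fun_prop)
  have hhb : ∀ i t, |h i t| ≤ C i * |t| ^ (-(β i)) := by
    intro i t
    rw [hh]
    split_ifs with ht
    · rw [abs_mul, abs_of_pos ht, abs_of_nonneg (by positivity : (0:ℝ) ≤ t ^ (-(β i)))]
      gcongr
      exact hCp i
    · have ht' : 0 ≤ -t := by linarith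
      rw [abs_mul, abs_of_nonpos (not_lt.1 ht),
        abs_of_nonneg (by positivity : (0:ℝ) ≤ (-t) ^ (-(β i)))]
      gcongr
      exact hCm i
  constructor
  · refine Integrable.mono' (hcyc.const_mul (∏ i, C i)) ?_ ?_
    · refine Measurable.aestronglyMeasurable (Finset.measurable_fun_prod _ fun i _ => ?_)
      exact (hhm i).comp (by fun_prop)
    · filter_upwards with x
      rw [Real.norm_eq_abs, Finset.abs_prod, ← Finset.prod_mul_distrib]
      exact Finset.prod_le_prod (fun i _ => abs_nonneg _) fun i _ => hhb i _
  rw [← setIntegral_congr_set hae]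
  have hcyc' := hcyc.congr_set_ae hae
  let G : ℕ → (Fin p → ℕ) → ℝ := fun n k =>
    ∏ i, ((n:ℝ) ^ β i * g i ((k (finRotate p i) : ℤ) - (k i : ℤ)))
  have hlim : Tendsto (fun n : ℕ => ∫ x in Set.univ.pi fun _ : Fin p => Set.Ioc (0:ℝ) 1,
      G n (fun i => ⌈x i * n⌉₊)) atTop
      (𝓝 (∫ x in Set.univ.pi fun _ : Fin p => Set.Ioc (0:ℝ) 1,
        ∏ i, h i (x (finRotate p i) - x i))) := by
    have hx0 : ∀ᵐ x : Fin p → ℝ ∂(volume.restrict (Set.univ.pi fun _ : Fin p => Set.Ioc (0:ℝ) 1)),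
        x ∈ (Set.univ.pi fun _ : Fin p => Set.Ioc (0:ℝ) 1) :=
      ae_restrict_mem (MeasurableSet.univ_pi fun _ => measurableSet_Ioc)
    have hx1 := ae_restrict_of_ae (s := Set.univ.pi fun _ : Fin p => Set.Ioc (0:ℝ) 1) (aux_ae p hp)
    refine tendsto_integral_filter_of_dominated_convergence
      (fun x => (∏ i, (C i * 2 ^ β i)) * ∏ i, |x (finRotate p i) - x i| ^ (-β i)) ?_ ?_
      (hcyc'.const_mul _) ?_
    · refine Eventually.of_forall fun n => Measurable.aestronglyMeasurable ?_
      have : Measurable (G n) := measurable_of_countable _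
      have h2 : Measurable fun (x : Fin p → ℝ) (i : Fin p) => ⌈x i * (n:ℝ)⌉₊ := by
        refine measurable_pi_lambda _ fun i => ?_
        have h1 : Measurable fun x : Fin p → ℝ => x i * (n:ℝ) := by fun_prop
        exact h1.nat_ceil
      exact this.comp h2
    · filter_upwards [eventually_gt_atTop 0] with n hn
      filter_upwards [hx0, hx1] with x hx hne
      rw [Real.norm_eq_abs, Finset.abs_prod, ← Finset.prod_mul_distrib]
      exact Finset.prod_le_prod (fun i _ => abs_nonneg _) fun i _ =>
        aux_dom (β i) (hβ i).1 (g i) (C i) (hC1 i) (hC2 i) n hn _ _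
          (hx _ trivial).1.le (hx _ trivial).1.le (hne i).symm
    · filter_upwards [hx0, hx1] with x hx hne
      refine tendsto_finsetProd _ fun i _ => ?_
      rw [hh]
      rcases lt_or_gt_of_ne (hne i) with hlt | hlt
      · rw [if_neg (by linarith)]
        have := aux_lim (β i) (fun k => g i (-k)) (ℓm i) (hgm i) _ _ (hx (finRotate p i) trivial).1.le hlt
        simpa only [neg_sub] using this
      · rw [if_pos (by linarith)]
        exact aux_lim (β i) (g i) (ℓp i) (hgp i) _ _ (hx i trivial).1.le hlt
  refine hlim.congr' ?_
  filter_upwards [eventually_gt_atTop 0] with n hn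
  have hn' : (0:ℝ) < n := by exact_mod_cast hn
  rw [aux_sum p (G n) n hn]
  simp only [G]
  simp_rw [Finset.prod_mul_distrib]
  rw [← Finset.mul_sum, ← mul_assoc, ← Real.rpow_sum_of_pos hn', ← Real.rpow_add hn']
  congr 2
  ring
end

section
/- Let $H_1,H_2\in(0,1)$ with $H_1+H_2<3/2$. For $n\in\mathbb{N}$ define $\gamma_i^{n}(k)=(1+|k|)^{2H_i-2}\,\mathbf{1}_{\{|k|<n\}}$ for $k\in\mathbb{Z}$ and $i=1,2$. Then $\frac{1}{n}\sum_{k=-n}^{n}\Big(\sum_{j\in\mathbb{Z}}\gamma_1^{n}(j)\,\gamma_2^{n}(k-j)\Big)^{2}\longrightarrow 0$ as $n\to\infty$. -/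
open MeasureTheory Filter Asymptotics Topology Real

/-- Pointwise bound on products of powers. -/
lemma prod_rpow_bound (x y a b d K : ℝ) (hx : 1 ≤ x) (hy : 1 ≤ y) (hK : 0 < K) (hxy : K ≤ x * y)
    (hd : 0 < d) (ha : d ≤ a) (hb : d ≤ b) :
    x ^ (-a) * y ^ (-b) ≤
      K ^ (-d) * (x ^ (-(a + b - 2 * d)) + y ^ (-(a + b - 2 * d))) := by
  have hx0 : 0 < x := by linarith
  have hy0 : 0 < y := by linarith
  have e : x ^ (-a) * y ^ (-b) = (x * y) ^ (-d) * (x ^ (-(a - d)) * y ^ (-(b - d))) := by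
    rw [Real.mul_rpow hx0.le hy0.le]
    have e1 : x ^ (-a) = x ^ (-d) * x ^ (-(a - d)) := by
      rw [← Real.rpow_add hx0]; congr 1; ring
    have e2 : y ^ (-b) = y ^ (-d) * y ^ (-(b - d)) := by
      rw [← Real.rpow_add hy0]; congr 1; ring
    rw [e1, e2]; ring
  rw [e]
  have f1 : (x * y) ^ (-d) ≤ K ^ (-d) :=
    Real.rpow_le_rpow_of_nonpos hK hxy (by linarith)
  have f2 : x ^ (-(a - d)) * y ^ (-(b - d)) ≤
      x ^ (-(a + b - 2 * d)) + y ^ (-(a + b - 2 * d)) := by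
    rcases le_total x y with h | h
    · have g : y ^ (-(b - d)) ≤ x ^ (-(b - d)) :=
        Real.rpow_le_rpow_of_nonpos hx0 h (by linarith)
      have g2 : x ^ (-(a + b - 2 * d)) = x ^ (-(a - d)) * x ^ (-(b - d)) := by
        rw [← Real.rpow_add hx0]; congr 1; ring
      have := mul_le_mul_of_nonneg_left g (Real.rpow_nonneg hx0.le (-(a - d)))
      have := Real.rpow_nonneg hy0.le (-(a + b - 2 * d))
      linarith
    · have g : x ^ (-(a - d)) ≤ y ^ (-(a - d)) :=
        Real.rpow_le_rpow_of_nonpos hy0 h (by linarith)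
      have g2 : y ^ (-(a + b - 2 * d)) = y ^ (-(a - d)) * y ^ (-(b - d)) := by
        rw [← Real.rpow_add hy0]; congr 1; ring
      have := mul_le_mul_of_nonneg_right g (Real.rpow_nonneg hy0.le (-(b - d)))
      have := Real.rpow_nonneg hx0.le (-(a + b - 2 * d))
      linarith
  exact mul_le_mul f1 f2 (by positivity) (by positivity)

lemma summable_int_rpow (s : ℝ) (hs : 1 < s) :
    Summable (fun j : ℤ => (1 + |(j : ℝ)|) ^ (-s)) := by
  have h : Summable (fun n : ℕ => (1 + (n : ℝ)) ^ (-s)) := by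
    have h0 : Summable (fun n : ℕ => (n : ℝ) ^ (-s)) :=
      Real.summable_nat_rpow.2 (by linarith)
    have := (summable_nat_add_iff 1).2 h0
    refine this.congr fun n => ?_
    push_cast
    rw [add_comm]
  refine Summable.of_nat_of_neg ?_ ?_
  · simpa using h
  · simpa using h

lemma sum_Icc_natAbs_le (g : ℕ → ℝ) (hg : ∀ m, 0 ≤ g m) (n : ℕ) :
    ∑ k ∈ Finset.Icc (-(n : ℤ)) (n : ℤ), g k.natAbs ≤ 2 * ∑ m ∈ Finset.range (n + 1), g m := by
  classical
  have hsub : Finset.Icc (-(n : ℤ)) (n : ℤ) ⊆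
      (Finset.range (n + 1)).image (fun m : ℕ => (m : ℤ)) ∪
        (Finset.range (n + 1)).image (fun m : ℕ => -(m : ℤ)) := by
    intro k hk
    simp only [Finset.mem_Icc] at hk
    simp only [Finset.mem_union, Finset.mem_image, Finset.mem_range]
    rcases le_total 0 k with h | h
    · exact Or.inl ⟨k.natAbs, by omega, by omega⟩
    · exact Or.inr ⟨k.natAbs, by omega, by omega⟩
  have h1 := Finset.sum_le_sum_of_subset_of_nonneg (f := fun k : ℤ => g k.natAbs) hsub
    (fun _ _ _ => hg _)
  have h2 := Finset.sum_union_inter (f := fun k : ℤ => g k.natAbs)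
    (s₁ := (Finset.range (n + 1)).image (fun m : ℕ => (m : ℤ)))
    (s₂ := (Finset.range (n + 1)).image (fun m : ℕ => -(m : ℤ)))
  have h3 : 0 ≤ ∑ k ∈ (Finset.range (n + 1)).image (fun m : ℕ => (m : ℤ)) ∩
      (Finset.range (n + 1)).image (fun m : ℕ => -(m : ℤ)), g k.natAbs :=
    Finset.sum_nonneg fun _ _ => hg _
  rw [Finset.sum_image (by intro a _ b _ h; simpa using h),
    Finset.sum_image (by intro a _ b _ h; simpa using h)] at h2
  simp only [Int.natAbs_neg, Int.natAbs_natCast] at h2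
  linarith

/-- Convolution-square estimate: for `H₁, H₂ ∈ (0,1)` with `H₁ + H₂ < 3/2`,
with `γᵢⁿ(k) = (1+|k|)^{2Hᵢ-2} 𝟙_{|k|<n}`, the normalized sum of squared
convolutions `(1/n) ∑_{k=-n}^{n} (γ₁ⁿ * γ₂ⁿ (k))² → 0`. -/
theorem stmt18
    (H1 H2 : ℝ) (h1 : H1 ∈ Set.Ioo (0:ℝ) 1) (h2 : H2 ∈ Set.Ioo (0:ℝ) 1)
    (hH : H1 + H2 < 3 / 2)
    (γ1 γ2 : ℕ → ℤ → ℝ)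
    (hγ1 : ∀ (n : ℕ) (k : ℤ),
      γ1 n k = if |k| < (n : ℤ) then (1 + |(k : ℝ)|) ^ (2 * H1 - 2) else 0)
    (hγ2 : ∀ (n : ℕ) (k : ℤ),
      γ2 n k = if |k| < (n : ℤ) then (1 + |(k : ℝ)|) ^ (2 * H2 - 2) else 0) :
    Tendsto (fun n : ℕ =>
        (1 / (n : ℝ)) *
          ∑ k ∈ Finset.Icc (-(n : ℤ)) (n : ℤ),
            (∑' j : ℤ, γ1 n j * γ2 n (k - j)) ^ 2)
      atTop (𝓝 0) := by
  obtain ⟨h10, h11⟩ := h1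
  obtain ⟨h20, h21⟩ := h2
  obtain ⟨d, hd, hda, hdb, hds⟩ : ∃ d : ℝ, 0 < d ∧ d ≤ 2 - 2 * H1 ∧ d ≤ 2 - 2 * H2 ∧
      1 < (2 - 2 * H1) + (2 - 2 * H2) - 2 * d := by
    refine ⟨min (min (2 - 2 * H1) (2 - 2 * H2)) ((3 - 2 * (H1 + H2)) / 4), ?_, ?_, ?_, ?_⟩
    · refine lt_min (lt_min ?_ ?_) ?_ <;> linarith
    · exact (min_le_left _ _).trans (min_le_left _ _)
    · exact (min_le_left _ _).trans (min_le_right _ _)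
    · have := min_le_right (min (2 - 2 * H1) (2 - 2 * H2)) ((3 - 2 * (H1 + H2)) / 4)
      linarith
  set s : ℝ := (2 - 2 * H1) + (2 - 2 * H2) - 2 * d with hs
  have hS := summable_int_rpow s hds
  set S : ℝ := ∑' j : ℤ, (1 + |(j : ℝ)|) ^ (-s) with hSdef
  have n1 : ∀ n k, 0 ≤ γ1 n k := fun n k => by
    rw [hγ1]; split_ifs <;> positivity
  have n2 : ∀ n k, 0 ≤ γ2 n k := fun n k => by
    rw [hγ2]; split_ifs <;> positivity
  have key : ∀ (n : ℕ) (k : ℤ),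
      (∑' j : ℤ, γ1 n j * γ2 n (k - j)) ≤ (1 + |(k : ℝ)|) ^ (-d) * (2 * S) := by
    intro n k
    have hS' : Summable (fun j : ℤ => (1 + |((k - j : ℤ) : ℝ)|) ^ (-s)) :=
      (Equiv.subLeft k).summable_iff.2 hS
    have hSe : ∑' j : ℤ, (1 + |((k - j : ℤ) : ℝ)|) ^ (-s) = S :=
      (Equiv.subLeft k).tsum_eq (fun j : ℤ => (1 + |(j : ℝ)|) ^ (-s))
    have hB := (hS.add hS').mul_left ((1 + |(k : ℝ)|) ^ (-d))
    have hle : ∀ j : ℤ, γ1 n j * γ2 n (k - j) ≤ (1 + |(k : ℝ)|) ^ (-d) *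
        ((1 + |(j : ℝ)|) ^ (-s) + (1 + |((k - j : ℤ) : ℝ)|) ^ (-s)) := by
      intro j
      have u1 : γ1 n j ≤ (1 + |(j : ℝ)|) ^ (-(2 - 2 * H1)) := by
        rw [hγ1, neg_sub]; split_ifs
        · exact le_rfl
        · positivity
      have u2 : γ2 n (k - j) ≤ (1 + |((k - j : ℤ) : ℝ)|) ^ (-(2 - 2 * H2)) := by
        rw [hγ2, neg_sub]; split_ifs
        · exact le_rfl
        · positivity
      refine (mul_le_mul u1 u2 (n2 _ _) (by positivity)).trans ?_
      refine prod_rpow_bound _ _ _ _ _ _ ?_ ?_ (by positivity) ?_ hd hda hdb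
      · linarith [abs_nonneg (j : ℝ)]
      · linarith [abs_nonneg ((k - j : ℤ) : ℝ)]
      · have t : |(k : ℝ)| ≤ |(j : ℝ)| + |((k - j : ℤ) : ℝ)| := by
          have := abs_add_le (j : ℝ) ((k - j : ℤ) : ℝ)
          push_cast at this ⊢
          simpa using this
        nlinarith [mul_nonneg (abs_nonneg (j : ℝ)) (abs_nonneg ((k - j : ℤ) : ℝ))]
    have hA : Summable (fun j : ℤ => γ1 n j * γ2 n (k - j)) :=
      Summable.of_nonneg_of_le (fun j => mul_nonneg (n1 _ _) (n2 _ _)) hle hB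
    have := hA.tsum_le_tsum hle hB
    rw [tsum_mul_left, hS.tsum_add hS', hSe] at this
    linarith
  set g : ℕ → ℝ := fun m => ((1 + (m : ℝ)) ^ (-d)) ^ 2 with hg
  have hg0 : ∀ m, 0 ≤ g m := fun m => by positivity
  have hgt : Tendsto g atTop (𝓝 0) := by
    have t1 : Tendsto (fun m : ℕ => 1 + (m : ℝ)) atTop atTop :=
      tendsto_atTop_add_const_left _ _ tendsto_natCast_atTop_atTop
    simpa using ((tendsto_rpow_neg_atTop hd).comp t1).pow 2
  have hc := ((tendsto_add_atTop_iff_nat 1).2 hgt.cesaro).const_mul (4 * (2 * S) ^ 2)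
  rw [mul_zero] at hc
  refine squeeze_zero' (Eventually.of_forall fun n => ?_) ?_ hc
  · have : 0 ≤ ∑ k ∈ Finset.Icc (-(n : ℤ)) (n : ℤ), (∑' j : ℤ, γ1 n j * γ2 n (k - j)) ^ 2 :=
      Finset.sum_nonneg fun _ _ => sq_nonneg _
    positivity
  · filter_upwards [eventually_ge_atTop 1] with n hn
    have hn' : (1 : ℝ) ≤ n := by exact_mod_cast hn
    have q1 : ∑ k ∈ Finset.Icc (-(n : ℤ)) (n : ℤ), (∑' j : ℤ, γ1 n j * γ2 n (k - j)) ^ 2 ≤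
        (2 * S) ^ 2 * ∑ k ∈ Finset.Icc (-(n : ℤ)) (n : ℤ), g k.natAbs := by
      rw [Finset.mul_sum]
      refine Finset.sum_le_sum fun k _ => ?_
      have p : 0 ≤ ∑' j : ℤ, γ1 n j * γ2 n (k - j) :=
        tsum_nonneg fun j => mul_nonneg (n1 _ _) (n2 _ _)
      refine (pow_le_pow_left₀ p (key n k) 2).trans (le_of_eq ?_)
      simp only [hg, Nat.cast_natAbs, Int.cast_abs]
      ring
    have q2 := sum_Icc_natAbs_le g hg0 n
    have q3 : 0 ≤ ∑ m ∈ Finset.range (n + 1), g m := Finset.sum_nonneg fun _ _ => hg0 _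
    have q4 : (1 / (n : ℝ)) ≤ 2 * ((n + 1 : ℕ) : ℝ)⁻¹ := by
      rw [← div_eq_mul_inv, div_le_div_iff₀ (by positivity) (by positivity)]
      push_cast; linarith
    calc _ ≤ (2 * ((n + 1 : ℕ) : ℝ)⁻¹) *
          ((2 * S) ^ 2 * (2 * ∑ m ∈ Finset.range (n + 1), g m)) := by
            refine mul_le_mul q4 (q1.trans ?_) (Finset.sum_nonneg fun _ _ => sq_nonneg _)
              (by positivity)
            exact mul_le_mul_of_nonneg_left q2 (sq_nonneg _)
      _ = _ := by ring
end
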